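/- arXiv:1301.0401 — 5 statements merged into one kernel-verified Lean document; each statement's English description precedes it below -/
import Mathlib

section
/- For every capacity C > 0 and every ex-post individually rational, Bayesian incentive compatible single-agent mechanism with randomized payments, there is a BIC two-priced mechanism with the same allocation probabilities and pointwise weakly higher expected payment. Precisely: let q : [0,∞) → [0,1] and, for each v ≥ 0, let μ_v be a probability measure on (−∞, v] with ∫|t| dμ_v(t) < ∞ (the distribution of the price charged on report v conditional on being served; losers pay 0), and suppose that for all v, v' ≥ 0, q(v)·∫ min(v − t, C) dμ_v(t) ≥ q(v')·∫ min(v − t, C) dμ_{v'}(t). Then there exist q_v, q_c : [0,∞) → [0,1] with q_v + q_c = q such that (q_v, q_c) is a BIC two-priced mechanism with capacity C and, for every v ≥ 0, v·q_v(v) + (v − C)·q_c(v) ≥ q(v)·∫ t dμ_v(t). -/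
open MeasureTheory Set

/-!
Replace the random price charged to type `v` by the lottery over the two prices `v` and `v - C`
that gives `v` the same expected capacitated utility. The utility `min z C` is linear between the
wealth levels `0` and `C` which this lottery induces for `v`, but only concave and nondecreasing
overall, so a misreporting type values the lottery at most as much as the original random price.
Wealth above `C` is worthless to the agent, so equal utility costs the seller weakly less under the
lottery.
-/

section Surplus

variable {C v : ℝ} {ν : Measure ℝ}

/-- Expected capacitated utility of an agent with value `v` who is served at a random price with
distribution `ν`. -/
noncomputable def expectedSurplus (C v : ℝ) (ν : Measure ℝ) : ℝ :=
  ∫ t, min (v - t) C ∂ν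

/-- Probability of the discounted price `v - C` in the lottery over the prices `v` and `v - C`
that leaves an agent with value `v` as well off as the random price `ν`. -/
noncomputable def discountProb (C v : ℝ) (ν : Measure ℝ) : ℝ :=
  expectedSurplus C v ν / C

lemma integrable_min_sub_of_ae_le [IsFiniteMeasure ν] {b : ℝ} (hν : ∀ᵐ t ∂ν, t ≤ b) (v C : ℝ) :
    Integrable (fun t => min (v - t) C) ν :=
  Integrable.of_mem_Icc (min (v - b) C) C (by fun_prop) <| hν.mono fun t ht =>
    ⟨min_le_min_right C (sub_le_sub_left ht v), min_le_right (v - t) C⟩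

lemma expectedSurplus_nonneg (hC : 0 ≤ C) (hν : ∀ᵐ t ∂ν, t ≤ v) : 0 ≤ expectedSurplus C v ν :=
  integral_nonneg_of_ae <| hν.mono fun _ ht => le_min (sub_nonneg.2 ht) hC

lemma expectedSurplus_le_capacity [IsProbabilityMeasure ν] (hν : ∀ᵐ t ∂ν, t ≤ v) :
    expectedSurplus C v ν ≤ C := by
  simpa [expectedSurplus] using integral_mono (integrable_min_sub_of_ae_le hν v C)
    (integrable_const C) fun t => min_le_right (v - t) C

lemma expectedSurplus_le_sub_integral [IsProbabilityMeasure ν] (hν : Integrable (fun t => t) ν) :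
    expectedSurplus C v ν ≤ v - ∫ t, t ∂ν := by
  have hsub : Integrable (fun t => v - t) ν := (integrable_const v).sub hν
  calc
    expectedSurplus C v ν ≤ ∫ t, v - t ∂ν :=
      integral_mono (hsub.inf (integrable_const C)) hsub fun t => min_le_left (v - t) C
    _ = v - ∫ t, t ∂ν := by simp [integral_sub (integrable_const v) hν]

lemma discountProb_mul_capacity (hC : C ≠ 0) : discountProb C v ν * C = expectedSurplus C v ν :=
  div_mul_cancel₀ _ hC

lemma discountProb_nonneg (hC : 0 ≤ C) (hν : ∀ᵐ t ∂ν, t ≤ v) : 0 ≤ discountProb C v ν :=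
  div_nonneg (expectedSurplus_nonneg hC hν) hC

lemma discountProb_le_one [IsProbabilityMeasure ν] (hC : 0 < C) (hν : ∀ᵐ t ∂ν, t ≤ v) :
    discountProb C v ν ≤ 1 :=
  (div_le_one hC).2 (expectedSurplus_le_capacity hν)

end Surplus

section Deviation

variable {C : ℝ} {u : ℝ → ℝ}

lemma concaveOn_min_const (C : ℝ) : ConcaveOn ℝ univ fun z : ℝ => min z C :=
  (concaveOn_id convex_univ).inf (concaveOn_const C convex_univ)

lemma lottery_le_of_concaveOn_of_monotone (hu : ConcaveOn ℝ univ u) (hmono : Monotone u)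
    (hC : 0 < C) {w : ℝ} (hw : 0 ≤ w) (d : ℝ) :
    (1 - min w C / C) * u d + min w C / C * u (d + C) ≤ u (d + w) := by
  have hprob_nonneg : 0 ≤ min w C / C := div_nonneg (le_min hw hC.le) hC.le
  have hprob_le_one : min w C / C ≤ 1 := (div_le_one hC).2 (min_le_right w C)
  have hmean : (1 - min w C / C) * d + min w C / C * (d + C) = d + min w C := by
    field_simp
    ring
  calc
    (1 - min w C / C) * u d + min w C / C * u (d + C)
      ≤ u ((1 - min w C / C) * d + min w C / C * (d + C)) :=
        hu.2 trivial trivial (sub_nonneg.2 hprob_le_one) hprob_nonneg (sub_add_cancel _ _)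
    _ = u (d + min w C) := congrArg u hmean
    _ ≤ u (d + w) := hmono (add_le_add_right (min_le_left w C) d)

lemma discountProb_lottery_le_integral (hu : ConcaveOn ℝ univ u) (hmono : Monotone u) (hC : 0 < C)
    {v v' : ℝ} {ν : Measure ℝ} [IsProbabilityMeasure ν] (hν : ∀ᵐ t ∂ν, t ≤ v')
    (hint : Integrable (fun t => u (v - t)) ν) :
    (1 - discountProb C v' ν) * u (v - v') + discountProb C v' ν * u (v - v' + C) ≤
      ∫ t, u (v - t) ∂ν := by
  have hweight : Integrable (fun t => min (v' - t) C / C) ν :=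
    (integrable_min_sub_of_ae_le hν v' C).div_const C
  have hfull : Integrable (fun t => (1 - min (v' - t) C / C) * u (v - v')) ν :=
    ((integrable_const 1).sub hweight).mul_const _
  have hdiscount : Integrable (fun t => min (v' - t) C / C * u (v - v' + C)) ν :=
    hweight.mul_const _
  calc
    (1 - discountProb C v' ν) * u (v - v') + discountProb C v' ν * u (v - v' + C)
      = ∫ t, (1 - min (v' - t) C / C) * u (v - v') + min (v' - t) C / C * u (v - v' + C) ∂ν := by
        rw [integral_add hfull hdiscount, integral_mul_const, integral_mul_const,
          integral_sub (integrable_const 1) hweight, integral_div]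
        simp [discountProb, expectedSurplus]
    _ ≤ ∫ t, u (v - t) ∂ν := integral_mono_ae (hfull.add hdiscount) hint <| hν.mono fun t ht => by
        simpa only [sub_add_sub_cancel] using
          lottery_le_of_concaveOn_of_monotone hu hmono hC (sub_nonneg.2 ht) (v - v')

end Deviation

theorem two_priced_dominates_randomized_general {C : ℝ} (hC : 0 < C) {S : Set ℝ} {q : ℝ → ℝ}
    (hq : ∀ v ∈ S, 0 ≤ q v) {μ : ℝ → Measure ℝ}
    (hprob : ∀ v ∈ S, IsProbabilityMeasure (μ v)) (hsupp : ∀ v ∈ S, ∀ᵐ t ∂(μ v), t ≤ v)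
    (hint : ∀ v ∈ S, Integrable (fun t => t) (μ v))
    (hBIC : ∀ v ∈ S, ∀ v' ∈ S,
      q v * ∫ t, min (v - t) C ∂(μ v) ≥ q v' * ∫ t, min (v - t) C ∂(μ v')) :
    ∃ qv qc : ℝ → ℝ,
      (∀ v ∈ S, 0 ≤ qv v ∧ 0 ≤ qc v ∧ qv v + qc v = q v) ∧
      (∀ v ∈ S, ∀ v' ∈ S,
        qv v * min (v - v) C + qc v * min (v - v + C) C ≥
          qv v' * min (v - v') C + qc v' * min (v - v' + C) C) ∧
      (∀ v ∈ S, v * qv v + (v - C) * qc v ≥ q v * ∫ t, t ∂(μ v)) := by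
  let p (v : ℝ) : ℝ := discountProb C v (μ v)
  have hp (v : ℝ) : p v * C = expectedSurplus C v (μ v) := discountProb_mul_capacity hC.ne'
  refine ⟨fun v => q v * (1 - p v), fun v => q v * p v, fun v hv => ?_,
    fun v hv v' hv' => ?_, fun v hv => ?_⟩
  · have := hprob v hv
    exact ⟨mul_nonneg (hq v hv) (sub_nonneg.2 (discountProb_le_one hC (hsupp v hv))),
      mul_nonneg (hq v hv) (discountProb_nonneg hC.le (hsupp v hv)), by ring⟩
  · have := hprob v' hv'
    have hdeviation : (1 - p v') * min (v - v') C + p v' * min (v - v' + C) C ≤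
        expectedSurplus C v (μ v') :=
      discountProb_lottery_le_integral (concaveOn_min_const C) (monotone_id.min monotone_const) hC
        (hsupp v' hv') (integrable_min_sub_of_ae_le (hsupp v' hv') v C)
    calc
      q v * (1 - p v) * min (v - v) C + q v * p v * min (v - v + C) C
        = q v * expectedSurplus C v (μ v) := by
          rw [sub_self, min_eq_left hC.le, zero_add, min_self, ← hp]
          ring
      _ ≥ q v' * expectedSurplus C v (μ v') := hBIC v hv v' hv'
      _ ≥ q v' * ((1 - p v') * min (v - v') C + p v' * min (v - v' + C) C) :=
        mul_le_mul_of_nonneg_left hdeviation (hq v' hv')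
      _ = q v' * (1 - p v') * min (v - v') C + q v' * p v' * min (v - v' + C) C := by ring
  · have := hprob v hv
    calc
      v * (q v * (1 - p v)) + (v - C) * (q v * p v)
        = q v * (v - expectedSurplus C v (μ v)) := by
          rw [← hp]
          ring
      _ ≥ q v * ∫ t, t ∂(μ v) :=
        mul_le_mul_of_nonneg_left (le_sub_comm.1 (expectedSurplus_le_sub_integral (hint v hv)))
          (hq v hv)

/-- For every capacity `C > 0` and every ex-post IR, BIC single-agent
mechanism with randomized payments (allocation probability `q v`, price distribution
`μ v` supported on `(-∞, v]` with finite first moment), there is a BIC two-priced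
mechanism with the same allocation probabilities and pointwise weakly higher expected
payment. -/
theorem two_priced_dominates_randomized
    (C : ℝ) (hC : 0 < C)
    (q : ℝ → ℝ) (hq : ∀ v, 0 ≤ v → q v ∈ Icc (0 : ℝ) 1)
    (μ : ℝ → Measure ℝ)
    (hprob : ∀ v, 0 ≤ v → IsProbabilityMeasure (μ v))
    (hsupp : ∀ v, 0 ≤ v → μ v (Ioi v) = 0)
    (hint : ∀ v, 0 ≤ v → Integrable (fun t => t) (μ v))
    (hBIC : ∀ v, 0 ≤ v → ∀ v', 0 ≤ v' →
      q v * ∫ t, min (v - t) C ∂(μ v) ≥ q v' * ∫ t, min (v - t) C ∂(μ v')) :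
    ∃ qv qc : ℝ → ℝ,
      (∀ v, 0 ≤ v → 0 ≤ qv v ∧ 0 ≤ qc v ∧ qv v + qc v = q v) ∧
      (∀ v, 0 ≤ v → ∀ v', 0 ≤ v' →
        qv v * min (v - v) C + qc v * min (v - v + C) C ≥
          qv v' * min (v - v') C + qc v' * min (v - v' + C) C) ∧
      (∀ v, 0 ≤ v → v * qv v + (v - C) * qc v ≥ q v * ∫ t, t ∂(μ v)) :=
  two_priced_dominates_randomized_general hC (S := Ici 0) (fun v hv => (hq v hv).1) hprob
    (fun v hv => (measure_eq_zero_iff_ae_notMem.1 (hsupp v hv)).mono fun _ => notMem_Ioi.1)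
    hint hBIC
end

section
/- Let C > 0 and let q_v, q_c : [0,∞) → [0,1] with q_v(v) + q_c(v) ≤ 1 for all v define a two-priced mechanism. The mechanism is BIC if and only if for all v, v' with 0 ≤ v < v' ≤ v + C: q_v(v)·(v' − v) ≤ C·(q_c(v') − q_c(v)) ≤ (q_v(v') + q_c(v'))·(v' − v). -/
/-!
A report `r` yields the true value `v` the utility `C * qc r - (qv r + qc r) * (r - v)` when `v ≤ r`
and `C * qc r + qv r * (v - r)` when `r ≤ v ≤ r + C`, while truth yields `C * qc v`. The two bounds
on `C * (qc v' - qc v)` are therefore precisely the incentive constraints between `v` and `v'` at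
distance at most `C`. These imply the remaining constraints: overreporting by more than `C` gives
nonpositive utility, and underreporting `r < v - C` gives exactly what it gives to the value
`r + C`, whose truthful utility `C * qc (r + C)` is at most `C * qc v` since `qc` is monotone.
-/

open Set

theorem monotoneOn_of_le_of_le_add {G α : Type*} [AddCommGroup G] [LinearOrder G]
    [IsOrderedAddMonoid G] [Archimedean G] [Preorder α] {s : Set G} [s.OrdConnected] {f : G → α}
    {C : G} (hC : 0 < C) (hf : ∀ u ∈ s, ∀ w ∈ s, u ≤ w → w ≤ u + C → f u ≤ f w) :
    MonotoneOn f s := by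
  intro u hu w hw huw
  obtain ⟨n, hn⟩ := Archimedean.arch (w - u) hC
  rw [sub_le_iff_le_add'] at hn
  induction n generalizing u with
  | zero => exact hf u hu w hw huw (hn.trans (by simpa using hC.le))
  | succ n ih =>
    rcases le_total w (u + C) with hnear | hfar
    · exact hf u hu w hw huw hnear
    · have huC : u ≤ u + C := le_add_of_nonneg_right hC.le
      have hmem : u + C ∈ s := Set.Icc_subset s hu hw ⟨huC, hfar⟩
      have hn' : w ≤ u + C + n • C := by rwa [add_assoc, ← succ_nsmul']
      exact (hf u hu _ hmem huC le_rfl).trans (ih hmem hfar hn')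

section TwoPriced

variable {K : Type*} [CommRing K] [LinearOrder K]

/-- The expected utility of an agent with value `v` who reports `r` to the two-priced mechanism
`(qv, qc)`. The agent's wealth gain from trade is capped at the capacity `C`. -/
def twoPricedUtility (C : K) (qv qc : K → K) (v r : K) : K :=
  qv r * min (v - r) C + qc r * min (v - r + C) C

/-- Bayesian incentive compatibility of a two-priced mechanism. Values and reports are restricted
to be nonnegative, so `qv` and `qc` play no role at negative arguments. -/
def IsTwoPricedBIC (C : K) (qv qc : K → K) : Prop :=
  ∀ v, 0 ≤ v → ∀ r, 0 ≤ r → twoPricedUtility C qv qc v r ≤ twoPricedUtility C qv qc v v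

/-- The two-sided bound on the increments of `qc` over distances at most `C` that characterizes
Bayesian incentive compatibility. -/
def HasTwoPricedIncrementBounds (C : K) (qv qc : K → K) : Prop :=
  ∀ v v', 0 ≤ v → v < v' → v' ≤ v + C →
    qv v * (v' - v) ≤ C * (qc v' - qc v) ∧
      C * (qc v' - qc v) ≤ (qv v' + qc v') * (v' - v)

variable [IsStrictOrderedRing K] {C : K} {qv qc : K → K} {v r : K}

theorem twoPricedUtility_of_le (hC : 0 ≤ C) (hvr : v ≤ r) :
    twoPricedUtility C qv qc v r = C * qc r - (qv r + qc r) * (r - v) := by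
  rw [twoPricedUtility, min_eq_left (by linarith), min_eq_left (by linarith)]
  ring

theorem twoPricedUtility_of_le_of_le_add (hrv : r ≤ v) (hvr : v ≤ r + C) :
    twoPricedUtility C qv qc v r = C * qc r + qv r * (v - r) := by
  rw [twoPricedUtility, min_eq_left (by linarith), min_eq_right (by linarith)]
  ring

theorem twoPricedUtility_of_add_le (hC : 0 ≤ C) (hrv : r + C ≤ v) :
    twoPricedUtility C qv qc v r = twoPricedUtility C qv qc (r + C) r := by
  rw [twoPricedUtility_of_le_of_le_add (by linarith) le_rfl, twoPricedUtility,
    min_eq_right (by linarith), min_eq_right (by linarith)]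
  ring

theorem twoPricedUtility_self (hC : 0 ≤ C) : twoPricedUtility C qv qc v v = C * qc v := by
  simp [twoPricedUtility_of_le hC le_rfl]

theorem twoPricedUtility_le_self_iff_of_le (hC : 0 ≤ C) (hvr : v ≤ r) :
    twoPricedUtility C qv qc v r ≤ twoPricedUtility C qv qc v v ↔
      C * (qc r - qc v) ≤ (qv r + qc r) * (r - v) := by
  rw [twoPricedUtility_of_le hC hvr, twoPricedUtility_self hC, mul_sub C, sub_le_comm]

theorem twoPricedUtility_le_self_iff_of_le_of_le_add (hC : 0 ≤ C) (hrv : r ≤ v)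
    (hvr : v ≤ r + C) :
    twoPricedUtility C qv qc v r ≤ twoPricedUtility C qv qc v v ↔
      qv r * (v - r) ≤ C * (qc v - qc r) := by
  rw [twoPricedUtility_of_le_of_le_add hrv hvr, twoPricedUtility_self hC, mul_sub C,
    le_sub_iff_add_le']

theorem twoPricedUtility_nonpos_of_add_le (hC : 0 ≤ C) (hqv : 0 ≤ qv r) (hqc : 0 ≤ qc r)
    (hvr : v + C ≤ r) : twoPricedUtility C qv qc v r ≤ 0 := by
  have hloss : v - r ≤ 0 := by linarith
  have hdiscounted_loss : v - r + C ≤ 0 := by linarith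
  exact add_nonpos (mul_nonpos_of_nonneg_of_nonpos hqv (min_le_of_left_le hloss))
    (mul_nonpos_of_nonneg_of_nonpos hqc (min_le_of_left_le hdiscounted_loss))

theorem IsTwoPricedBIC.hasTwoPricedIncrementBounds (hC : 0 ≤ C) (h : IsTwoPricedBIC C qv qc) :
    HasTwoPricedIncrementBounds C qv qc := by
  intro v v' hv hlt hle
  have hv' : 0 ≤ v' := hv.trans hlt.le
  exact ⟨(twoPricedUtility_le_self_iff_of_le_of_le_add hC hlt.le hle).1 (h v' hv' v hv),
    (twoPricedUtility_le_self_iff_of_le hC hlt.le).1 (h v hv v' hv')⟩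

namespace HasTwoPricedIncrementBounds

theorem monotoneOn [Archimedean K] (h : HasTwoPricedIncrementBounds C qv qc) (hC : 0 < C)
    (hqv : ∀ v, 0 ≤ v → 0 ≤ qv v) : MonotoneOn qc (Ici 0) := by
  refine monotoneOn_of_le_of_le_add hC fun u hu w _ huw hwu => ?_
  rcases huw.eq_or_lt with rfl | hlt
  · exact le_rfl
  · have hincr : 0 ≤ C * (qc w - qc u) :=
      (mul_nonneg (hqv u hu) (sub_nonneg.2 huw)).trans (h u w hu hlt hwu).1
    exact sub_nonneg.1 (nonneg_of_mul_nonneg_right hincr hC)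

theorem utility_overreport_le (h : HasTwoPricedIncrementBounds C qv qc) (hC : 0 ≤ C)
    (hqv : 0 ≤ qv r) (hqc : ∀ v, 0 ≤ v → 0 ≤ qc v) (hv : 0 ≤ v) (hvr : v < r) :
    twoPricedUtility C qv qc v r ≤ twoPricedUtility C qv qc v v := by
  rcases le_total r (v + C) with hnear | hfar
  · exact (twoPricedUtility_le_self_iff_of_le hC hvr.le).2 (h v r hv hvr hnear).2
  · calc twoPricedUtility C qv qc v r
        ≤ 0 := twoPricedUtility_nonpos_of_add_le hC hqv (hqc r (hv.trans hvr.le)) hfar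
      _ ≤ C * qc v := mul_nonneg hC (hqc v hv)
      _ = twoPricedUtility C qv qc v v := (twoPricedUtility_self hC).symm

theorem utility_underreport_le [Archimedean K] (h : HasTwoPricedIncrementBounds C qv qc)
    (hC : 0 < C) (hqv : ∀ v, 0 ≤ v → 0 ≤ qv v) (hr : 0 ≤ r) (hrv : r < v) :
    twoPricedUtility C qv qc v r ≤ twoPricedUtility C qv qc v v := by
  have hnear {w : K} (hrw : r < w) (hwr : w ≤ r + C) :
      twoPricedUtility C qv qc w r ≤ twoPricedUtility C qv qc w w :=
    (twoPricedUtility_le_self_iff_of_le_of_le_add hC.le hrw.le hwr).2 (h r w hr hrw hwr).1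
  rcases le_total v (r + C) with hle | hfar
  · exact hnear hrv hle
  · have hmono : qc (r + C) ≤ qc v :=
      h.monotoneOn hC hqv (add_nonneg hr hC.le) (hr.trans hrv.le) hfar
    calc twoPricedUtility C qv qc v r
        = twoPricedUtility C qv qc (r + C) r := twoPricedUtility_of_add_le hC.le hfar
      _ ≤ twoPricedUtility C qv qc (r + C) (r + C) := hnear (lt_add_of_pos_right r hC) le_rfl
      _ = C * qc (r + C) := twoPricedUtility_self hC.le
      _ ≤ C * qc v := mul_le_mul_of_nonneg_left hmono hC.le
      _ = twoPricedUtility C qv qc v v := (twoPricedUtility_self hC.le).symm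

theorem isTwoPricedBIC [Archimedean K] (h : HasTwoPricedIncrementBounds C qv qc) (hC : 0 < C)
    (hqv : ∀ v, 0 ≤ v → 0 ≤ qv v) (hqc : ∀ v, 0 ≤ v → 0 ≤ qc v) : IsTwoPricedBIC C qv qc := by
  intro v hv r hr
  rcases lt_trichotomy v r with hlt | rfl | hgt
  · exact h.utility_overreport_le hC.le (hqv r hr) hqc hv hlt
  · exact le_rfl
  · exact h.utility_underreport_le hC hqv hr hgt

end HasTwoPricedIncrementBounds

theorem two_priced_BIC_characterization_general [Archimedean K] (hC : 0 < C)
    (hqv : ∀ v, 0 ≤ v → 0 ≤ qv v) (hqc : ∀ v, 0 ≤ v → 0 ≤ qc v) :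
    IsTwoPricedBIC C qv qc ↔ HasTwoPricedIncrementBounds C qv qc :=
  ⟨fun h => h.hasTwoPricedIncrementBounds hC.le, fun h => h.isTwoPricedBIC hC hqv hqc⟩

end TwoPriced

/-- A two-priced mechanism `(q_v, q_c)` with capacity `C > 0` is BIC
iff for all `0 ≤ v < v' ≤ v + C`:
`q_v(v)·(v' − v) ≤ C·(q_c(v') − q_c(v)) ≤ (q_v(v') + q_c(v'))·(v' − v)`. -/
theorem two_priced_BIC_characterization
    (C : ℝ) (hC : 0 < C)
    (qv qc : ℝ → ℝ)
    (hqv : ∀ v, 0 ≤ v → qv v ∈ Icc (0 : ℝ) 1)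
    (hqc : ∀ v, 0 ≤ v → qc v ∈ Icc (0 : ℝ) 1)
    (hsum : ∀ v, 0 ≤ v → qv v + qc v ≤ 1) :
    (∀ v, 0 ≤ v → ∀ v', 0 ≤ v' →
        qv v * min (v - v) C + qc v * min (v - v + C) C ≥
          qv v' * min (v - v') C + qc v' * min (v - v' + C) C)
    ↔ (∀ v v' : ℝ, 0 ≤ v → v < v' → v' ≤ v + C →
        qv v * (v' - v) ≤ C * (qc v' - qc v) ∧
          C * (qc v' - qc v) ≤ (qv v' + qc v') * (v' - v)) :=
  two_priced_BIC_characterization_general hC (fun v hv => (hqv v hv).1) fun v hv => (hqc v hv).1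
end

section
/- Let C > 0 and let (q_v, q_c) be a BIC two-priced mechanism with q_v and q_c Lebesgue measurable. Then for all 0 ≤ v < v': ∫_v^{v'} q_v(z) dz ≤ C·(q_c(v') − q_c(v)) ≤ ∫_v^{v'} (q_v(z) + q_c(z)) dz. -/
open Set

/-!
A truthful agent of value `v` has utility `C * qc v`. So comparing truth-telling with a nearby
under-report bounds the increments of `C * qc` from below, and comparing it with an over-report
bounds them from above: `qv a * (b - a) ≤ C * qc b - C * qc a ≤ (qv b + qc b) * (b - a)` whenever
`a ≤ b ≤ a + C`. Hence `C * qc` is Lipschitz, the fundamental theorem of calculus applies to it,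
and at each point of differentiability the derivative lies between `qv` and `qv + qc`.
-/

open Filter Topology MeasureTheory

section SlopeComparison

variable {f g : ℝ → ℝ} {a b : ℝ}

theorem integral_le_sub_of_frequently_le_slope (hab : a ≤ b)
    (hf : AbsolutelyContinuousOnInterval f a b) (hg : IntervalIntegrable g volume a b)
    (hslope : ∀ᵐ x, x ∈ Ioo a b → ∃ᶠ y in 𝓝[≠] x, g x ≤ slope f x y) :
    ∫ x in a..b, g x ≤ f b - f a := by
  have g_le_deriv : g ≤ᵐ[volume.restrict (Icc a b)] deriv f := by
    rw [← restrict_Ioo_eq_restrict_Icc, EventuallyLE, ae_restrict_iff' measurableSet_Ioo]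
    filter_upwards [hf.ae_differentiableAt, hslope] with x hdiff hx hxab
    have hderiv := (hdiff (uIcc_of_le hab ▸ Ioo_subset_Icc_self hxab)).hasDerivAt
    exact ge_of_tendsto_of_frequently (hasDerivAt_iff_tendsto_slope.1 hderiv) (hx hxab)
  calc ∫ x in a..b, g x
      ≤ ∫ x in a..b, deriv f x :=
        intervalIntegral.integral_mono_ae_restrict hab hg hf.intervalIntegrable_deriv g_le_deriv
    _ = f b - f a := hf.integral_deriv_eq_sub

theorem sub_le_integral_of_frequently_slope_le (hab : a ≤ b)
    (hf : AbsolutelyContinuousOnInterval f a b) (hg : IntervalIntegrable g volume a b)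
    (hslope : ∀ᵐ x, x ∈ Ioo a b → ∃ᶠ y in 𝓝[≠] x, slope f x y ≤ g x) :
    f b - f a ≤ ∫ x in a..b, g x := by
  have h := integral_le_sub_of_frequently_le_slope hab hf.neg hg.neg <| by
    simpa only [slope_neg_fun, Pi.neg_apply, neg_le_neg_iff] using hslope
  simp only [Pi.neg_apply, intervalIntegral.integral_neg] at h
  linarith

end SlopeComparison

namespace TwoPriced

/-- The expected utility of an agent of value `v` reporting `v'` in the two-priced mechanism that
charges `v'` with probability `qv v'` and `v' - C` with probability `qc v'`. -/
def utility (C : ℝ) (qv qc : ℝ → ℝ) (v v' : ℝ) : ℝ :=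
  qv v' * min (v - v') C + qc v' * min (v - v' + C) C

/-- Bayesian incentive compatibility: no nonnegative value gains by a nonnegative misreport.
Allocation functions are defined on all of `ℝ`, and their values at negative reports are
irrelevant. -/
def IsBIC (C : ℝ) (qv qc : ℝ → ℝ) : Prop :=
  ∀ v, 0 ≤ v → ∀ v', 0 ≤ v' → utility C qv qc v v' ≤ utility C qv qc v v

variable {C : ℝ} {qv qc : ℝ → ℝ} {a b : ℝ}

theorem utility_self (hC : 0 ≤ C) (v : ℝ) : utility C qv qc v v = C * qc v := by
  rw [utility, sub_self, min_eq_left hC, zero_add, min_self]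
  ring

theorem utility_of_le_report (hC : 0 ≤ C) (hab : a ≤ b) :
    utility C qv qc a b = C * qc b - (qv b + qc b) * (b - a) := by
  rw [utility, min_eq_left (by linarith), min_eq_left (by linarith)]
  ring

theorem utility_of_report_le (hab : a ≤ b) :
    utility C qv qc b a = C * qc a + qv a * min (b - a) C := by
  rw [utility, min_eq_right (by linarith : C ≤ b - a + C)]
  ring

namespace IsBIC

theorem mul_min_le_sub (h : IsBIC C qv qc) (hC : 0 ≤ C) (ha : 0 ≤ a) (hab : a ≤ b) :
    qv a * min (b - a) C ≤ C * qc b - C * qc a := by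
  have no_underreport := h b (ha.trans hab) a ha
  rw [utility_self hC, utility_of_report_le hab] at no_underreport
  linarith

theorem sub_le_add_mul (h : IsBIC C qv qc) (hC : 0 ≤ C) (ha : 0 ≤ a) (hab : a ≤ b) :
    C * qc b - C * qc a ≤ (qv b + qc b) * (b - a) := by
  have no_overreport := h a ha b (ha.trans hab)
  rw [utility_self hC, utility_of_le_report hC hab] at no_overreport
  linarith

theorem le_slope (h : IsBIC C qv qc) (hC : 0 ≤ C) (ha : 0 ≤ a) (hab : a < b)
    (hbC : b ≤ a + C) : qv a ≤ slope (fun x ↦ C * qc x) a b := by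
  rw [slope_def_field, le_div_iff₀ (sub_pos.2 hab)]
  simpa only [min_eq_left (sub_le_iff_le_add'.2 hbC)] using h.mul_min_le_sub hC ha hab.le

theorem slope_le (h : IsBIC C qv qc) (hC : 0 ≤ C) (ha : 0 ≤ a) (hab : a < b) :
    slope (fun x ↦ C * qc x) b a ≤ qv b + qc b := by
  rw [slope_comm, slope_def_field, div_le_iff₀ (sub_pos.2 hab)]
  exact h.sub_le_add_mul hC ha hab.le

theorem monotoneOn (h : IsBIC C qv qc) (hC : 0 < C) (hqv : ∀ v, 0 ≤ v → 0 ≤ qv v) :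
    MonotoneOn qc (Ici 0) := by
  intro a ha b _ hab
  refine le_of_mul_le_mul_left (sub_nonneg.1 ?_) hC
  calc 0 ≤ qv a * min (b - a) C := mul_nonneg (hqv a ha) (le_min (sub_nonneg.2 hab) hC.le)
    _ ≤ C * qc b - C * qc a := h.mul_min_le_sub hC.le ha hab

theorem lipschitzOnWith (h : IsBIC C qv qc) (hC : 0 < C) (hqv : ∀ v, 0 ≤ v → 0 ≤ qv v)
    (hsum : ∀ v, 0 ≤ v → qv v + qc v ≤ 1) : LipschitzOnWith 1 (fun x ↦ C * qc x) (Ici 0) := by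
  refine LipschitzOnWith.of_le_add fun x hx y hy ↦ ?_
  rcases le_total x y with hxy | hyx
  · calc C * qc x ≤ C * qc y := mul_le_mul_of_nonneg_left (h.monotoneOn hC hqv hx hy hxy) hC.le
      _ ≤ C * qc y + dist x y := le_add_of_nonneg_right dist_nonneg
  · rw [← sub_le_iff_le_add']
    calc C * qc x - C * qc y ≤ (qv x + qc x) * (x - y) := h.sub_le_add_mul hC.le hy hyx
      _ ≤ x - y := mul_le_of_le_one_left (sub_nonneg.2 hyx) (hsum x hx)
      _ ≤ dist x y := le_abs_self _

variable (h : IsBIC C qv qc) (hC : 0 < C) (hqv : ∀ v, 0 ≤ v → 0 ≤ qv v)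
  (hsum : ∀ v, 0 ≤ v → qv v + qc v ≤ 1) (ha : 0 ≤ a) (hab : a ≤ b)
include h hC hqv hsum ha hab

theorem absolutelyContinuousOnInterval :
    AbsolutelyContinuousOnInterval (fun x ↦ C * qc x) a b :=
  ((h.lipschitzOnWith hC hqv hsum).mono
    (ordConnected_Ici.uIcc_subset ha (ha.trans hab))).absolutelyContinuousOnInterval

theorem integral_le (hint : IntervalIntegrable qv volume a b) :
    ∫ z in a..b, qv z ≤ C * (qc b - qc a) := by
  rw [mul_sub]
  refine integral_le_sub_of_frequently_le_slope hab
    (h.absolutelyContinuousOnInterval hC hqv hsum ha hab) hint (ae_of_all _ fun x hx ↦ ?_)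
  have right_slopes : ∀ᶠ y in 𝓝[>] x, qv x ≤ slope (fun z ↦ C * qc z) x y := by
    filter_upwards [Ioo_mem_nhdsGT (lt_add_of_pos_right x hC)] with y hy
    exact h.le_slope hC.le (ha.trans hx.1.le) hy.1 hy.2.le
  exact right_slopes.frequently.filter_mono (nhdsGT_le_nhdsNE x)

theorem le_integral (hint : IntervalIntegrable qv volume a b) :
    C * (qc b - qc a) ≤ ∫ z in a..b, (qv z + qc z) := by
  have hqc : IntervalIntegrable qc volume a b :=
    ((h.monotoneOn hC hqv).mono
      (ordConnected_Ici.uIcc_subset ha (ha.trans hab))).intervalIntegrable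
  rw [mul_sub]
  refine sub_le_integral_of_frequently_slope_le hab
    (h.absolutelyContinuousOnInterval hC hqv hsum ha hab) (hint.add hqc)
    (ae_of_all _ fun x hx ↦ ?_)
  have left_slopes : ∀ᶠ y in 𝓝[<] x, slope (fun z ↦ C * qc z) x y ≤ qv x + qc x := by
    filter_upwards [Ioo_mem_nhdsLT hx.1] with y hy
    exact h.slope_le hC.le (ha.trans hy.1.le) hy.2
  exact left_slopes.frequently.filter_mono (nhdsLT_le_nhdsNE x)

end IsBIC

end TwoPriced

/-- For a measurable BIC two-priced mechanism `(q_v, q_c)` with capacity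
`C > 0`, for all `0 ≤ v < v'`:
`∫_v^{v'} q_v ≤ C·(q_c(v') − q_c(v)) ≤ ∫_v^{v'} (q_v + q_c)`. -/
theorem two_priced_BIC_integral_form
    (C : ℝ) (hC : 0 < C)
    (qv qc : ℝ → ℝ) (hmv : Measurable qv) (hmc : Measurable qc)
    (hqv : ∀ v, 0 ≤ v → qv v ∈ Icc (0 : ℝ) 1)
    (hqc : ∀ v, 0 ≤ v → qc v ∈ Icc (0 : ℝ) 1)
    (hsum : ∀ v, 0 ≤ v → qv v + qc v ≤ 1)
    (hBIC : ∀ v, 0 ≤ v → ∀ v', 0 ≤ v' →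
        qv v * min (v - v) C + qc v * min (v - v + C) C ≥
          qv v' * min (v - v') C + qc v' * min (v - v' + C) C) :
    ∀ v v' : ℝ, 0 ≤ v → v < v' →
      (∫ z in v..v', qv z) ≤ C * (qc v' - qc v) ∧
        C * (qc v' - qc v) ≤ ∫ z in v..v', (qv z + qc z) := by
  intro v v' hv hvv'
  have truthful : TwoPriced.IsBIC C qv qc := hBIC
  have hqv0 : ∀ z, 0 ≤ z → 0 ≤ qv z := fun z hz ↦ (hqv z hz).1
  have hint : IntervalIntegrable qv volume v v' := by
    refine (intervalIntegrable_iff_integrableOn_Ioc_of_le hvv'.le).2 <|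
      .of_bound measure_Ioc_lt_top hmv.aestronglyMeasurable 1 <|
        (ae_restrict_mem measurableSet_Ioc).mono fun z hz ↦ ?_
    have hz0 : 0 ≤ z := hv.trans hz.1.le
    exact (Real.norm_of_nonneg (hqv0 z hz0)).trans_le (hqv z hz0).2
  exact ⟨truthful.integral_le hC hqv0 hsum hv hvv'.le hint,
    truthful.le_integral hC hqv0 hsum hv hvv'.le hint⟩
end

section
/- Let C > 0, let (q_v, q_c) be a measurable BIC two-priced mechanism with capacity C, and let the agent's value V be drawn from a distribution on [0,∞) with CDF F, density f > 0, and finite mean. Then E[p(V)] ≤ E[φ⁺(V)·q(V)] + E[φ⁺(V)·q_c(V)] + E[max(V − C, 0)·q_c(V)], where q = q_v + q_c, p(v) = v·q(v) − C·q_c(v), φ(v) = v − (1 − F(v))/f(v), and φ⁺(v) = max(φ(v), 0). -/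
open MeasureTheory Set

/-!
Truthful utility is `C * qc`, so the constraints against underreporting by at most `C` say that `qv`
is a forward subgradient of `C * qc`; in particular `qc` is monotone. Let `k` be the greatest convex
minorant of `qc` on `[0, C]`, extended by `k C` beyond `C`. On `[0, C]` a supporting ray of `qc`
lifts to one of `k`, so `(qv + qc - k) / C` is a forward subgradient of `k`; integrating it, and
bounding `2 ∫ k` by the trapezoid rule, shows that a risk-neutral agent facing the allocation
`qv + qc + k` would pay at least the two-priced payment minus `max (v - C) 0 * qc v`. Myerson's
identity turns the expectation of the risk-neutral payment into virtual surplus, where `k ≤ qc`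
gives the bound.
-/

section ConvexMinorant

variable {E : Type*} [AddCommMonoid E] [Module ℝ E] {s : Set E} {u m : E → ℝ} {x : E}

/-- The greatest convex minorant of `u` on `s`, as a pointwise supremum of convex minorants.
It carries information only on `s`, and only if `u` has a convex minorant there. -/
noncomputable def convexMinorant (s : Set E) (u : E → ℝ) (x : E) : ℝ :=
  ⨆ m : {m : E → ℝ // ConvexOn ℝ s m ∧ ∀ y ∈ s, m y ≤ u y}, m.1 x

lemma le_convexMinorant (hm : ConvexOn ℝ s m) (hmu : ∀ y ∈ s, m y ≤ u y) (hx : x ∈ s) :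
    m x ≤ convexMinorant s u x :=
  le_ciSup (f := fun m : {m : E → ℝ // ConvexOn ℝ s m ∧ ∀ y ∈ s, m y ≤ u y} => m.1 x)
    ⟨u x, forall_mem_range.2 fun n => n.2.2 x hx⟩ ⟨m, hm, hmu⟩

lemma convexMinorant_le (hm : ConvexOn ℝ s m) (hmu : ∀ y ∈ s, m y ≤ u y) (hx : x ∈ s) :
    convexMinorant s u x ≤ u x :=
  have : Nonempty {m : E → ℝ // ConvexOn ℝ s m ∧ ∀ y ∈ s, m y ≤ u y} := ⟨⟨m, hm, hmu⟩⟩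
  ciSup_le fun n => n.2.2 x hx

lemma convexOn_convexMinorant (hm : ConvexOn ℝ s m) (hmu : ∀ y ∈ s, m y ≤ u y) :
    ConvexOn ℝ s (convexMinorant s u) := by
  have : Nonempty {m : E → ℝ // ConvexOn ℝ s m ∧ ∀ y ∈ s, m y ≤ u y} := ⟨⟨m, hm, hmu⟩⟩
  refine ⟨hm.1, fun x hx y hy a b ha hb hab => ciSup_le fun n => ?_⟩
  calc n.1 (a • x + b • y) ≤ a • n.1 x + b • n.1 y := n.2.1.2 hx hy ha hb hab
    _ ≤ a • convexMinorant s u x + b • convexMinorant s u y := by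
      gcongr
      exacts [le_convexMinorant n.2.1 n.2.2 hx, le_convexMinorant n.2.1 n.2.2 hy]

end ConvexMinorant

section RealConvexMinorant

variable {s : Set ℝ} {u m : ℝ → ℝ}

/- If the ray meets the minorant again to the left of `x`, convexity alone gives the bound;
otherwise its maximum with the minorant is a convex minorant. -/
lemma convexMinorant_add_mul_sub_le (hm : ConvexOn ℝ s m) (hmu : ∀ y ∈ s, m y ≤ u y)
    {x y p : ℝ} (hy : y ∈ s) (hxy : x ≤ y)
    (hray : ∀ t ∈ s, x ≤ t → convexMinorant s u x + p * (t - x) ≤ u t) :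
    convexMinorant s u x + p * (y - x) ≤ convexMinorant s u y := by
  set κ := convexMinorant s u
  have hκ : ConvexOn ℝ s κ := convexOn_convexMinorant hm hmu
  have hκu : ∀ t ∈ s, κ t ≤ u t := fun t ht => convexMinorant_le hm hmu ht
  rcases hxy.eq_or_lt with rfl | hlt
  · simp
  by_cases hcross : ∃ a ∈ s, a < x ∧ κ a ≤ κ x + p * (a - x)
  · obtain ⟨a, ha, hax, hκa⟩ := hcross
    have hp : p ≤ (κ x - κ a) / (x - a) := by
      rw [le_div_iff₀ (sub_pos.2 hax)]; linarith
    have hslope := (le_div_iff₀ (sub_pos.2 hlt)).1 (hp.trans (hκ.slope_mono_adjacent ha hy hax hlt))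
    linarith
  · push Not at hcross
    have haffine : ConvexOn ℝ s fun t => κ x + p * (t - x) := by
      refine ⟨hm.1, fun t _ r _ a b _ _ hab => le_of_eq ?_⟩
      simp only [smul_eq_mul]
      linear_combination (-κ x + p * x) * hab
    refine le_sup_right.trans (le_convexMinorant (hκ.sup haffine) (fun t ht => ?_) hy)
    refine sup_le (hκu t ht) ?_
    rcases lt_or_ge t x with htx | hxt
    · exact (hcross t ht htx).le.trans (hκu t ht)
    · exact hray t ht hxt

lemma monotoneOn_convexMinorant (hu : MonotoneOn u s) (hm : ConvexOn ℝ s m)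
    (hmu : ∀ y ∈ s, m y ≤ u y) : MonotoneOn (convexMinorant s u) s := by
  intro x hx y hy hxy
  have hray : ∀ t ∈ s, x ≤ t → convexMinorant s u x + 0 * (t - x) ≤ u t := fun t ht hxt => by
    simpa using (convexMinorant_le hm hmu hx).trans (hu hx ht hxt)
  simpa using convexMinorant_add_mul_sub_le hm hmu hy hxy hray

end RealConvexMinorant

section ForwardSubgradient

variable {D k : ℝ → ℝ} {δ : ℝ} {s : Set ℝ}

/-- `D x` is a slope at `x` supporting `k` on the part of `s` lying within distance `δ` to the
right of `x`, for every `x ∈ s`: the form in which the incentive constraints are used. -/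
def IsForwardSubgradientOn (D k : ℝ → ℝ) (δ : ℝ) (s : Set ℝ) : Prop :=
  ∀ ⦃x⦄, x ∈ s → ∀ ⦃y⦄, y ∈ s → x ≤ y → y ≤ x + δ → (y - x) * D x ≤ k y - k x

lemma IsForwardSubgradientOn.mono {t : Set ℝ} (hD : IsForwardSubgradientOn D k δ s)
    (hts : t ⊆ s) : IsForwardSubgradientOn D k δ t :=
  fun _ hx _ hy => hD (hts hx) (hts hy)

lemma IsForwardSubgradientOn.add_sub_convexMinorant {u m : ℝ → ℝ} {c : ℝ}
    (hD : IsForwardSubgradientOn D (fun x => c * u x) c s) (hc : 0 < c)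
    (hs : ∀ x ∈ s, ∀ y ∈ s, y ≤ x + c) (hm : ConvexOn ℝ s m) (hmu : ∀ y ∈ s, m y ≤ u y) :
    IsForwardSubgradientOn (fun x => D x + u x - convexMinorant s u x)
      (fun x => c * convexMinorant s u x) c s := by
  intro x hx y hy hxy _
  set κ := convexMinorant s u
  have hslope : c * ((D x + u x - κ x) / c) = D x + u x - κ x := by field_simp
  have hray : ∀ t ∈ s, x ≤ t → κ x + (D x + u x - κ x) / c * (t - x) ≤ u t := fun t ht hxt => by
    have hgap : 0 ≤ (c - (t - x)) * (u x - κ x) :=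
      mul_nonneg (by linarith [hs x hx t ht]) (sub_nonneg.2 (convexMinorant_le hm hmu hx))
    refine le_of_mul_le_mul_left ?_ hc
    linear_combination hD hx ht hxt (hs x hx t ht) + hgap + (t - x) * hslope
  linear_combination c * convexMinorant_add_mul_sub_le hm hmu hy hxy hray - (y - x) * hslope

lemma IsForwardSubgradientOn.intervalIntegral_le_sub {a b : ℝ}
    (hD : IsForwardSubgradientOn D k δ (Icc a b)) (hδ : 0 < δ) (hab : a ≤ b)
    (hk : MonotoneOn k (Icc a b)) (hDi : IntervalIntegrable D volume a b) :
    ∫ x in a..b, D x ≤ k b - k a := by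
  have hk' : MonotoneOn k (uIcc a b) := by rwa [uIcc_of_le hab]
  have hderiv : ∫ x in a..b, deriv k x ≤ k b - k a := by
    have hmem := hk'.intervalIntegral_deriv_mem_uIcc
    rw [uIcc_of_le (sub_nonneg.2 (hk ⟨le_rfl, hab⟩ ⟨hab, le_rfl⟩ hab))] at hmem
    exact hmem.2
  refine le_trans ?_ hderiv
  refine intervalIntegral.integral_mono_ae_restrict hab hDi hk'.intervalIntegrable_deriv ?_
  rw [← restrict_Ioo_eq_restrict_Icc]
  filter_upwards [ae_restrict_mem measurableSet_Ioo,
    ae_restrict_of_ae hk.ae_differentiableWithinAt_of_mem] with x hx hdiff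
  have hxI : x ∈ Icc a b := Ioo_subset_Icc_self hx
  have hkx := ((hdiff hxI).differentiableAt (Icc_mem_nhds hx.1 hx.2)).hasDerivAt
  have hslope := (hasDerivWithinAt_iff_tendsto_slope' self_notMem_Ioi).1
    (hkx.hasDerivWithinAt (s := Ioi x))
  refine ge_of_tendsto hslope ?_
  filter_upwards [Ioo_mem_nhdsGT (lt_min hx.2 (lt_add_of_pos_right x hδ))] with y hy
  have hyb := hy.2.le.trans (min_le_left _ _)
  rw [slope_def_field, le_div_iff₀ (sub_pos.2 hy.1), mul_comm]
  exact hD hxI ⟨hxI.1.trans hy.1.le, hyb⟩ hy.1.le (hy.2.le.trans (min_le_right _ _))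

end ForwardSubgradient

-- Pair each point with its reflection in the midpoint.
lemma two_mul_intervalIntegral_le_of_convexOn {k : ℝ → ℝ} {a b : ℝ} (hab : a ≤ b)
    (hk : ConvexOn ℝ (Icc a b) k) (hi : IntervalIntegrable k volume a b) :
    2 * ∫ x in a..b, k x ≤ (b - a) * (k a + k b) := by
  have hpair : ∀ x ∈ Icc a b, k x + k (a + b - x) ≤ k a + k b := fun x hx => by
    rw [← segment_eq_Icc hab] at hx
    obtain ⟨α, β, hα, hβ, hαβ, rfl⟩ := hx
    have hreflect : a + b - (α • a + β • b) = β • a + α • b := by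
      simp only [smul_eq_mul]
      linear_combination -(a + b) * hαβ
    have hleft := hk.2 (left_mem_Icc.2 hab) (right_mem_Icc.2 hab) hα hβ hαβ
    have hright := hk.2 (left_mem_Icc.2 hab) (right_mem_Icc.2 hab) hβ hα (by rwa [add_comm])
    rw [hreflect]
    simp only [smul_eq_mul] at hleft hright ⊢
    linear_combination hleft + hright + (k a + k b) * hαβ
  have hir : IntervalIntegrable (fun x => k (a + b - x)) volume a b := by
    simpa using (hi.comp_sub_left (a + b)).symm
  calc 2 * ∫ x in a..b, k x = ∫ x in a..b, (k x + k (a + b - x)) := by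
        rw [intervalIntegral.integral_add hi hir, intervalIntegral.integral_comp_sub_left]
        simp only [add_sub_cancel_left, add_sub_cancel_right, two_mul]
    _ ≤ ∫ _ in a..b, (k a + k b) :=
        intervalIntegral.integral_mono_on hab (hi.add hir) intervalIntegrable_const hpair
    _ = (b - a) * (k a + k b) := by rw [intervalIntegral.integral_const, smul_eq_mul]

lemma min_mem_Icc {α : Type*} [LinearOrder α] {a b x : α} (hab : a ≤ b) (hax : a ≤ x) :
    min x b ∈ Icc a b :=
  ⟨le_min hax hab, min_le_right _ _⟩

section Mechanism

variable {C : ℝ} {qv qc : ℝ → ℝ}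

/-- Expected utility of an agent with value `v` and capacity `C` who reports `v'`: she is served
at price `v'` with probability `qv v'` and at the discounted price `v' - C` with probability
`qc v'`, and her wealth saturates at `C`. -/
noncomputable def utility (C : ℝ) (qv qc : ℝ → ℝ) (v v' : ℝ) : ℝ :=
  qv v' * min (v - v') C + qc v' * min (v - v' + C) C

/-- Incentive compatibility against underreporting: no agent with value `v` gains by reporting a
smaller value `v'`. -/
def IsDownwardIC (C : ℝ) (qv qc : ℝ → ℝ) : Prop :=
  ∀ v v', 0 ≤ v' → v' ≤ v → utility C qv qc v v' ≤ utility C qv qc v v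

lemma utility_of_le {v v' : ℝ} (h : v' ≤ v) :
    utility C qv qc v v' = qv v' * min (v - v') C + C * qc v' := by
  rw [utility, min_eq_right (a := v - v' + C) (by linarith), mul_comm C]

lemma utility_self (hC : 0 ≤ C) (v : ℝ) : utility C qv qc v v = C * qc v := by
  rw [utility_of_le le_rfl, sub_self, min_eq_left hC, mul_zero, zero_add]

lemma IsDownwardIC.monotoneOn_discounted (hIC : IsDownwardIC C qv qc) (hC : 0 < C)
    (hqv : ∀ v, 0 ≤ v → 0 ≤ qv v) : MonotoneOn qc (Ici 0) := by
  intro x hx y _ hxy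
  have hle := hIC y x hx hxy
  rw [utility_of_le hxy, utility_self hC.le] at hle
  have hgain : 0 ≤ qv x * min (y - x) C :=
    mul_nonneg (hqv x hx) (le_min (sub_nonneg.2 hxy) hC.le)
  exact le_of_mul_le_mul_left (by linarith) hC

lemma IsDownwardIC.isForwardSubgradientOn (hIC : IsDownwardIC C qv qc) (hC : 0 < C) :
    IsForwardSubgradientOn qv (fun v => C * qc v) C (Ici 0) := by
  intro x hx y _ hxy hyx
  have hle := hIC y x hx hxy
  rw [utility_of_le hxy, utility_self hC.le, min_eq_left (sub_le_iff_le_add'.2 hyx)] at hle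
  linarith

lemma IsDownwardIC.undiscounted_le (hIC : IsDownwardIC C qv qc) (hC : 0 < C) {v : ℝ}
    (hv : 0 ≤ v) : qv v ≤ qc (v + C) - qc v := by
  have hle := hIC.isForwardSubgradientOn hC hv (add_nonneg hv hC.le)
    (le_add_of_nonneg_right hC.le) le_rfl
  exact le_of_mul_le_mul_left (by linarith) hC

/-- The extra allocation which, added to `qv + qc`, makes a risk-neutral agent pay at least as much
as the capacitated one, up to the discounted surplus above `C`. -/
noncomputable def extraAllocation (C : ℝ) (qc : ℝ → ℝ) (v : ℝ) : ℝ :=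
  convexMinorant (Icc 0 C) qc (min v C)

lemma extraAllocation_of_le {v : ℝ} (hv : v ≤ C) :
    extraAllocation C qc v = convexMinorant (Icc 0 C) qc v := by
  rw [extraAllocation, min_eq_left hv]

lemma extraAllocation_of_ge {v : ℝ} (hv : C ≤ v) :
    extraAllocation C qc v = extraAllocation C qc C := by
  rw [extraAllocation, extraAllocation, min_eq_right hv, min_self]

lemma extraAllocation_nonneg (hC : 0 ≤ C) (hqc : ∀ v, 0 ≤ v → 0 ≤ qc v) {v : ℝ} (hv : 0 ≤ v) :
    0 ≤ extraAllocation C qc v :=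
  le_convexMinorant (convexOn_const 0 (convex_Icc 0 C)) (fun v hv => hqc v hv.1)
    (min_mem_Icc hC hv)

lemma extraAllocation_le (hC : 0 ≤ C) (hqc : ∀ v, 0 ≤ v → 0 ≤ qc v)
    (hmono : MonotoneOn qc (Ici 0)) {v : ℝ} (hv : 0 ≤ v) : extraAllocation C qc v ≤ qc v :=
  (convexMinorant_le (convexOn_const 0 (convex_Icc 0 C)) (fun v hv => hqc v hv.1)
    (min_mem_Icc hC hv)).trans (hmono (le_min hv hC) hv (min_le_left _ _))

lemma monotoneOn_extraAllocation (hC : 0 ≤ C) (hqc : ∀ v, 0 ≤ v → 0 ≤ qc v)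
    (hmono : MonotoneOn qc (Ici 0)) : MonotoneOn (extraAllocation C qc) (Ici 0) :=
  fun _ hx _ hy hxy => monotoneOn_convexMinorant (hmono.mono Icc_subset_Ici_self)
    (convexOn_const 0 (convex_Icc 0 C)) (fun v hv => hqc v hv.1)
    (min_mem_Icc hC hx) (min_mem_Icc hC hy) (min_le_min_right C hxy)

lemma convexOn_extraAllocation (hqc : ∀ v, 0 ≤ v → 0 ≤ qc v) :
    ConvexOn ℝ (Icc 0 C) (extraAllocation C qc) :=
  (convexOn_convexMinorant (convexOn_const 0 (convex_Icc 0 C)) fun v hv => hqc v hv.1).congr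
    fun _ hv => (extraAllocation_of_le hv.2).symm

lemma IsDownwardIC.isForwardSubgradientOn_extraAllocation (hIC : IsDownwardIC C qv qc)
    (hC : 0 < C) (hqc : ∀ v, 0 ≤ v → 0 ≤ qc v) :
    IsForwardSubgradientOn (fun v => qv v + qc v - extraAllocation C qc v)
      (fun v => C * extraAllocation C qc v) C (Icc 0 C) := by
  have hsub := ((hIC.isForwardSubgradientOn hC).mono Icc_subset_Ici_self).add_sub_convexMinorant hC
    (fun x hx y hy => by linarith [hx.1, hy.2]) (convexOn_const 0 (convex_Icc 0 C))
    fun v hv => hqc v hv.1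
  intro x hx y hy
  simpa only [extraAllocation_of_le hx.2, extraAllocation_of_le hy.2] using hsub hx hy

/-- The payment that an allocation rule `h` extracts from a risk-neutral agent whose utility
vanishes at value `0`. -/
noncomputable def riskNeutralPayment (h : ℝ → ℝ) (v : ℝ) : ℝ :=
  v * h v - ∫ x in (0 : ℝ)..v, h x

lemma intervalIntegrable_of_monotoneOn_Ici {g : ℝ → ℝ} {a b : ℝ} (hg : MonotoneOn g (Ici 0))
    (ha : 0 ≤ a) (hab : a ≤ b) : IntervalIntegrable g volume a b :=
  MonotoneOn.intervalIntegrable <| hg.mono <| by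
    rw [uIcc_of_le hab]
    exact Icc_subset_Ici_self.trans (Ici_subset_Ici.2 ha)

lemma IsDownwardIC.intervalIntegral_add_extraAllocation_le (hIC : IsDownwardIC C qv qc)
    (hC : 0 < C) (hqv : ∀ v, 0 ≤ v → 0 ≤ qv v) (hqc : ∀ v, 0 ≤ v → 0 ≤ qc v) {v : ℝ}
    (hv : v ∈ Icc 0 C) (hqvi : IntervalIntegrable qv volume 0 v) :
    ∫ x in (0 : ℝ)..v, (qv x + qc x + extraAllocation C qc x) ≤
      (C + v) * extraAllocation C qc v := by
  set k := extraAllocation C qc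
  have hmono := hIC.monotoneOn_discounted hC hqv
  have hkmono : MonotoneOn k (Ici 0) := monotoneOn_extraAllocation hC.le hqc hmono
  have hqci := intervalIntegrable_of_monotoneOn_Ici hmono le_rfl hv.1
  have hki := intervalIntegrable_of_monotoneOn_Ici hkmono le_rfl hv.1
  have hsub : ∫ x in (0 : ℝ)..v, (qv x + qc x - k x) ≤ C * k v - C * k 0 :=
    ((hIC.isForwardSubgradientOn_extraAllocation hC hqc).mono
      (Icc_subset_Icc_right hv.2)).intervalIntegral_le_sub hC hv.1
      ((monotone_mul_left_of_nonneg hC.le).comp_monotoneOn (hkmono.mono Icc_subset_Ici_self))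
      ((hqvi.add hqci).sub hki)
  have htrapezoid : 2 * ∫ x in (0 : ℝ)..v, k x ≤ (v - 0) * (k 0 + k v) :=
    two_mul_intervalIntegral_le_of_convexOn hv.1
      ((convexOn_extraAllocation hqc).subset (Icc_subset_Icc_right hv.2) (convex_Icc 0 v)) hki
  have hk0 : v * k 0 ≤ C * k 0 :=
    mul_le_mul_of_nonneg_right hv.2 (extraAllocation_nonneg hC.le hqc le_rfl)
  calc ∫ x in (0 : ℝ)..v, (qv x + qc x + k x)
      = (∫ x in (0 : ℝ)..v, (qv x + qc x - k x)) + 2 * ∫ x in (0 : ℝ)..v, k x := by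
        rw [← intervalIntegral.integral_const_mul,
          ← intervalIntegral.integral_add ((hqvi.add hqci).sub hki) (hki.const_mul 2)]
        exact intervalIntegral.integral_congr fun x _ => by ring
    _ ≤ (C + v) * k v := by linarith

lemma IsDownwardIC.intervalIntegral_add_extraAllocation_le_of_ge (hIC : IsDownwardIC C qv qc)
    (hC : 0 < C) (hqv : ∀ v, 0 ≤ v → 0 ≤ qv v) (hqc : ∀ v, 0 ≤ v → 0 ≤ qc v) {v : ℝ}
    (hv : C ≤ v) (hqvi : IntervalIntegrable qv volume C v) :
    ∫ x in C..v, (qv x + qc x + extraAllocation C qc x) ≤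
      C * (qc v - qc C) + (v - C) * (qc v + extraAllocation C qc v) := by
  set k := extraAllocation C qc
  have hmono := hIC.monotoneOn_discounted hC hqv
  have hqkmono : MonotoneOn (fun x => qc x + k x) (Ici 0) :=
    hmono.add (monotoneOn_extraAllocation hC.le hqc hmono)
  have hqki := intervalIntegrable_of_monotoneOn_Ici hqkmono hC.le hv
  have hIcc : Icc C v ⊆ Ici 0 := Icc_subset_Ici_self.trans (Ici_subset_Ici.2 hC.le)
  have hsub : ∫ x in C..v, qv x ≤ C * qc v - C * qc C :=
    ((hIC.isForwardSubgradientOn hC).mono hIcc).intervalIntegral_le_sub hC hv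
      ((monotone_mul_left_of_nonneg hC.le).comp_monotoneOn (hmono.mono hIcc)) hqvi
  have hconst : ∫ x in C..v, (qc x + k x) ≤ ∫ _ in C..v, (qc v + k v) :=
    intervalIntegral.integral_mono_on hv hqki intervalIntegrable_const fun x hx =>
      hqkmono (hIcc hx) (hC.le.trans hv) hx.2
  calc ∫ x in C..v, (qv x + qc x + k x) = (∫ x in C..v, qv x) + ∫ x in C..v, (qc x + k x) := by
        simp only [add_assoc]
        exact intervalIntegral.integral_add hqvi hqki
    _ ≤ C * (qc v - qc C) + (v - C) * (qc v + k v) := by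
        rw [intervalIntegral.integral_const, smul_eq_mul] at hconst
        linarith

lemma IsDownwardIC.payment_le_riskNeutralPayment (hIC : IsDownwardIC C qv qc) (hC : 0 < C)
    (hqv : ∀ v, 0 ≤ v → 0 ≤ qv v) (hqc : ∀ v, 0 ≤ v → 0 ≤ qc v) {v : ℝ} (hv : 0 ≤ v)
    (hqvi : IntervalIntegrable qv volume 0 v) :
    v * (qv v + qc v) - C * qc v ≤
      riskNeutralPayment (fun x => qv x + qc x + extraAllocation C qc x) v +
        max (v - C) 0 * qc v := by
  have hmono := hIC.monotoneOn_discounted hC hqv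
  have hkle : ∀ {v}, 0 ≤ v → C * extraAllocation C qc v ≤ C * qc v := fun hv =>
    mul_le_mul_of_nonneg_left (extraAllocation_le hC.le hqc hmono hv) hC.le
  rw [riskNeutralPayment]
  rcases le_total v C with hvC | hCv
  · have hint := hIC.intervalIntegral_add_extraAllocation_le hC hqv hqc ⟨hv, hvC⟩ hqvi
    rw [max_eq_right (sub_nonpos.2 hvC)]
    linarith [hkle hv]
  · have hCmem : C ∈ uIcc 0 v := by rw [uIcc_of_le hv]; exact ⟨hC.le, hCv⟩
    have hqvi₀ := hqvi.mono_set (uIcc_subset_uIcc_left hCmem)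
    have hqvi₁ := hqvi.mono_set (uIcc_subset_uIcc_right hCmem)
    have hqkmono := hmono.add (monotoneOn_extraAllocation hC.le hqc hmono)
    have hint₀ := hIC.intervalIntegral_add_extraAllocation_le hC hqv hqc ⟨hC.le, le_rfl⟩ hqvi₀
    have hint₁ := hIC.intervalIntegral_add_extraAllocation_le_of_ge hC hqv hqc hCv hqvi₁
    have hsplit : ∫ x in (0 : ℝ)..v, (qv x + qc x + extraAllocation C qc x) =
        (∫ x in (0 : ℝ)..C, (qv x + qc x + extraAllocation C qc x)) +
          ∫ x in C..v, (qv x + qc x + extraAllocation C qc x) := by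
      simp only [add_assoc]
      exact (intervalIntegral.integral_add_adjacent_intervals
        (hqvi₀.add (intervalIntegrable_of_monotoneOn_Ici hqkmono le_rfl hC.le))
        (hqvi₁.add (intervalIntegrable_of_monotoneOn_Ici hqkmono hC.le hCv))).symm
    rw [extraAllocation_of_ge hCv] at hint₁
    rw [max_eq_left (sub_nonneg.2 hCv), hsplit, extraAllocation_of_ge hCv]
    linarith [hkle hC.le]

end Mechanism

section VirtualValue

variable {f F h : ℝ → ℝ}

/-- Myerson's virtual value of `v`, for a value distribution with density `f` and cumulative
distribution function `F`. -/
noncomputable def virtualValue (f F : ℝ → ℝ) (v : ℝ) : ℝ :=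
  v - (1 - F v) / f v

/-- Weight `h v * f t` on the triangle `v < t`, at the point `(t, v)`: integrating out `v` leaves
the information rent of the type `t`, integrating out `t` the types above `v`. -/
noncomputable def triangleKernel (h f : ℝ → ℝ) : ℝ × ℝ → ℝ :=
  {p | p.2 < p.1}.indicator fun p => h p.2 * f p.1

lemma setIntegral_triangleKernel_left (h f : ℝ → ℝ) {t : ℝ} (ht : 0 ≤ t) :
    ∫ v in Ici 0, triangleKernel h f (t, v) = (∫ v in (0 : ℝ)..t, h v) * f t := by
  have hslice : (fun v => triangleKernel h f (t, v)) = (Iio t).indicator fun v => h v * f t := rfl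
  rw [hslice, setIntegral_indicator measurableSet_Iio, Ici_inter_Iio, integral_mul_const,
    intervalIntegral.integral_of_le ht, integral_Ico_eq_integral_Ioc]

lemma setIntegral_triangleKernel_right (h f : ℝ → ℝ) {v : ℝ} (hv : 0 ≤ v) :
    ∫ t in Ici 0, triangleKernel h f (t, v) = h v * ∫ t in Ioi v, f t := by
  have hslice : (fun t => triangleKernel h f (t, v)) = (Ioi v).indicator fun t => h v * f t := rfl
  rw [hslice, setIntegral_indicator measurableSet_Ioi,
    inter_eq_right.2 ((Ioi_subset_Ioi hv).trans Ioi_subset_Ici_self), integral_const_mul]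

lemma integrable_triangleKernel_one (hf : AEStronglyMeasurable f (volume.restrict (Ici 0)))
    (hmean : IntegrableOn (fun v => v * f v) (Ici 0)) :
    Integrable (triangleKernel 1 f)
      ((volume.restrict (Ici 0)).prod (volume.restrict (Ici 0))) := by
  have hmeas : AEStronglyMeasurable (triangleKernel 1 f)
      ((volume.restrict (Ici 0)).prod (volume.restrict (Ici 0))) :=
    (aestronglyMeasurable_const.mul hf.comp_fst).indicator
      (measurableSet_lt measurable_snd measurable_fst)
  refine (integrable_prod_iff hmeas).2 ⟨?_, hmean.norm.congr ?_⟩ <;>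
    filter_upwards [ae_restrict_mem measurableSet_Ici] with t ht
  · have hslice : (fun v => triangleKernel 1 f (t, v)) = (Iio t).indicator fun _ => f t :=
      funext fun v => by simp [triangleKernel, indicator]
    rw [hslice, integrable_indicator_iff measurableSet_Iio, IntegrableOn,
      Measure.restrict_restrict measurableSet_Iio, inter_comm, Ici_inter_Iio]
    exact integrable_const _
  · have hnorm : ∀ v, ‖triangleKernel 1 f (t, v)‖ = triangleKernel 1 (fun t => ‖f t‖) (t, v) :=
      fun v => by simp [triangleKernel, norm_indicator_eq_indicator_norm]
    simp only [hnorm, setIntegral_triangleKernel_left 1 _ ht]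
    simp [abs_of_nonneg (mem_Ici.1 ht)]

lemma integrable_triangleKernel (hh : MemLp h ⊤ (volume.restrict (Ici 0)))
    (hf : AEStronglyMeasurable f (volume.restrict (Ici 0)))
    (hmean : IntegrableOn (fun v => v * f v) (Ici 0)) :
    Integrable (triangleKernel h f)
      ((volume.restrict (Ici 0)).prod (volume.restrict (Ici 0))) := by
  have hbdd := (integrable_triangleKernel_one hf hmean).bdd_mul hh.1.comp_snd
    (Measure.quasiMeasurePreserving_snd.ae (ae_le_lpNorm_exponent_top hh))
  refine hbdd.congr (.of_forall fun p => ?_)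
  by_cases hp : p.2 < p.1 <;> simp [triangleKernel, hp]

lemma integrableOn_primitive_mul (hh : MemLp h ⊤ (volume.restrict (Ici 0)))
    (hf : AEStronglyMeasurable f (volume.restrict (Ici 0)))
    (hmean : IntegrableOn (fun v => v * f v) (Ici 0)) :
    IntegrableOn (fun t => (∫ v in (0 : ℝ)..t, h v) * f t) (Ici 0) :=
  (integrable_triangleKernel hh hf hmean).integral_prod_left.congr <|
    ae_restrict_of_forall_mem measurableSet_Ici fun _ ht => setIntegral_triangleKernel_left h f ht

lemma integrableOn_mul_tail (hh : MemLp h ⊤ (volume.restrict (Ici 0)))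
    (hf : AEStronglyMeasurable f (volume.restrict (Ici 0)))
    (hmean : IntegrableOn (fun v => v * f v) (Ici 0)) :
    IntegrableOn (fun v => h v * ∫ t in Ioi v, f t) (Ici 0) :=
  (integrable_triangleKernel hh hf hmean).integral_prod_right.congr <|
    ae_restrict_of_forall_mem measurableSet_Ici fun _ hv => setIntegral_triangleKernel_right h f hv

lemma setIntegral_primitive_mul_eq_setIntegral_mul_tail
    (hh : MemLp h ⊤ (volume.restrict (Ici 0)))
    (hf : AEStronglyMeasurable f (volume.restrict (Ici 0)))
    (hmean : IntegrableOn (fun v => v * f v) (Ici 0)) :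
    ∫ t in Ici 0, (∫ v in (0 : ℝ)..t, h v) * f t = ∫ v in Ici 0, h v * ∫ t in Ioi v, f t :=
  calc ∫ t in Ici 0, (∫ v in (0 : ℝ)..t, h v) * f t
      = ∫ t in Ici 0, ∫ v in Ici 0, triangleKernel h f (t, v) :=
        setIntegral_congr_fun measurableSet_Ici fun _ ht =>
          (setIntegral_triangleKernel_left h f ht).symm
    _ = ∫ v in Ici 0, ∫ t in Ici 0, triangleKernel h f (t, v) :=
        integral_integral_swap (integrable_triangleKernel hh hf hmean)
    _ = ∫ v in Ici 0, h v * ∫ t in Ioi v, f t :=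
        setIntegral_congr_fun measurableSet_Ici fun _ hv => setIntegral_triangleKernel_right h f hv

lemma integrable_mul_mul_of_memLp_top {α : Type*} [MeasurableSpace α] {μ : Measure α}
    {g h f : α → ℝ} (hgf : Integrable (fun x => g x * f x) μ) (hh : MemLp h ⊤ μ) :
    Integrable (fun x => g x * h x * f x) μ :=
  (hgf.mul_of_top_left hh).congr (.of_forall fun _ => mul_right_comm _ _ _)

lemma integrableOn_riskNeutralPayment_mul (hh : MemLp h ⊤ (volume.restrict (Ici 0)))
    (hf : AEStronglyMeasurable f (volume.restrict (Ici 0)))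
    (hmean : IntegrableOn (fun v => v * f v) (Ici 0)) :
    IntegrableOn (fun v => riskNeutralPayment h v * f v) (Ici 0) :=
  ((integrable_mul_mul_of_memLp_top hmean hh).sub (integrableOn_primitive_mul hh hf hmean)).congr
    (.of_forall fun _ => (sub_mul _ _ _).symm)

lemma virtualValue_mul_density {v : ℝ} (hfv : f v ≠ 0) :
    virtualValue f F v * f v = v * f v - (1 - F v) := by
  rw [virtualValue, sub_mul, div_mul_cancel₀ _ hfv]

lemma integrableOn_virtualValue_mul_density (hf : AEStronglyMeasurable f (volume.restrict (Ici 0)))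
    (hfne : ∀ v, 0 ≤ v → f v ≠ 0) (hF : ∀ v, 0 ≤ v → 1 - F v = ∫ t in Ioi v, f t)
    (hmean : IntegrableOn (fun v => v * f v) (Ici 0)) :
    IntegrableOn (fun v => virtualValue f F v * f v) (Ici 0) :=
  (hmean.sub (integrableOn_mul_tail (memLp_top_const 1) hf hmean)).congr <|
    ae_restrict_of_forall_mem measurableSet_Ici fun v hv => by
      simp only [Pi.sub_apply, one_mul, virtualValue_mul_density (hfne v hv), hF v hv]

lemma setIntegral_riskNeutralPayment_eq_setIntegral_virtualValue
    (hh : MemLp h ⊤ (volume.restrict (Ici 0)))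
    (hf : AEStronglyMeasurable f (volume.restrict (Ici 0)))
    (hfne : ∀ v, 0 ≤ v → f v ≠ 0) (hF : ∀ v, 0 ≤ v → 1 - F v = ∫ t in Ioi v, f t)
    (hmean : IntegrableOn (fun v => v * f v) (Ici 0)) :
    ∫ v in Ici 0, riskNeutralPayment h v * f v =
      ∫ v in Ici 0, virtualValue f F v * h v * f v := by
  have hsurplus := integrable_mul_mul_of_memLp_top hmean hh
  calc ∫ v in Ici 0, riskNeutralPayment h v * f v
      = (∫ v in Ici 0, v * h v * f v) - ∫ v in Ici 0, (∫ x in (0 : ℝ)..v, h x) * f v := by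
        simp only [riskNeutralPayment, sub_mul]
        exact integral_sub hsurplus (integrableOn_primitive_mul hh hf hmean)
    _ = ∫ v in Ici 0, (v * h v * f v - h v * ∫ t in Ioi v, f t) := by
        rw [setIntegral_primitive_mul_eq_setIntegral_mul_tail hh hf hmean,
          integral_sub hsurplus (integrableOn_mul_tail hh hf hmean)]
    _ = ∫ v in Ici 0, virtualValue f F v * h v * f v :=
        setIntegral_congr_fun measurableSet_Ici fun v hv => by
          linear_combination
            h v * hF v hv - h v * virtualValue_mul_density (F := F) (hfne v hv)

end VirtualValue

section ExpectedPayment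

lemma integrableOn_posPart_mul {g f : ℝ → ℝ} (hf₀ : ∀ v, 0 ≤ v → 0 ≤ f v)
    (hgf : IntegrableOn (fun v => g v * f v) (Ici 0)) :
    IntegrableOn (fun v => max (g v) 0 * f v) (Ici 0) :=
  hgf.pos_part.congr <| ae_restrict_of_forall_mem measurableSet_Ici fun v hv => by
    simp only [max_mul_of_nonneg _ _ (hf₀ v hv), zero_mul]

lemma memLp_top_of_monotoneOn_Ici {g : ℝ → ℝ} {B : ℝ} (hg : MonotoneOn g (Ici 0))
    (hgB : ∀ v, 0 ≤ v → g v ∈ Icc 0 B) : MemLp g ⊤ (volume.restrict (Ici 0)) :=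
  have hmeas := (aemeasurable_restrict_of_monotoneOn measurableSet_Ici hg).aestronglyMeasurable
  memLp_top_of_bound hmeas B <|
    ae_restrict_of_forall_mem measurableSet_Ici fun v hv => by
      rw [Real.norm_of_nonneg (hgB v hv).1]
      exact (hgB v hv).2

lemma intervalIntegrable_of_memLp_top {g : ℝ → ℝ} (hg : MemLp g ⊤ (volume.restrict (Ici 0)))
    {v : ℝ} (hv : 0 ≤ v) : IntervalIntegrable g volume 0 v := by
  rw [intervalIntegrable_iff_integrableOn_Icc_of_le hv]
  exact (hg.mono_measure (Measure.restrict_mono_set _ Icc_subset_Ici_self)).integrable le_top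

variable {C B : ℝ} {qv qc : ℝ → ℝ}

lemma IsDownwardIC.memLp_top_undiscounted (hIC : IsDownwardIC C qv qc) (hC : 0 < C)
    (hmv : AEStronglyMeasurable qv (volume.restrict (Ici 0))) (hqv : ∀ v, 0 ≤ v → 0 ≤ qv v)
    (hqc : ∀ v, 0 ≤ v → qc v ∈ Icc 0 B) : MemLp qv ⊤ (volume.restrict (Ici 0)) :=
  memLp_top_of_bound hmv B <| ae_restrict_of_forall_mem measurableSet_Ici fun v hv => by
    rw [Real.norm_of_nonneg (hqv v hv)]
    linarith [hIC.undiscounted_le hC hv, (hqc v hv).1, (hqc _ (add_nonneg hv hC.le)).2]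

lemma IsDownwardIC.setIntegral_payment_le_setIntegral_riskNeutralPayment
    (hIC : IsDownwardIC C qv qc) (hC : 0 < C) (hqv : ∀ v, 0 ≤ v → 0 ≤ qv v)
    (hqc : ∀ v, 0 ≤ v → 0 ≤ qc v) (hqvb : MemLp qv ⊤ (volume.restrict (Ici 0)))
    (hqcb : MemLp qc ⊤ (volume.restrict (Ici 0)))
    (hkb : MemLp (extraAllocation C qc) ⊤ (volume.restrict (Ici 0))) {f : ℝ → ℝ}
    (hf₀ : ∀ v, 0 ≤ v → 0 ≤ f v) (hf : IntegrableOn f (Ici 0))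
    (hmean : IntegrableOn (fun v => v * f v) (Ici 0)) :
    (∫ v in Ici 0, (v * (qv v + qc v) - C * qc v) * f v) ≤
      (∫ v in Ici 0,
        riskNeutralPayment (fun x => qv x + qc x + extraAllocation C qc x) v * f v) +
        ∫ v in Ici 0, max (v - C) 0 * qc v * f v := by
  have hexcess : IntegrableOn (fun v => max (v - C) 0 * qc v * f v) (Ici 0) :=
    integrable_mul_mul_of_memLp_top (integrableOn_posPart_mul hf₀ <|
      (hmean.sub (hf.const_mul C)).congr (.of_forall fun _ => (sub_mul _ _ _).symm)) hqcb
  have hneutral :=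
    integrableOn_riskNeutralPayment_mul ((hqvb.add hqcb).add hkb) hf.aestronglyMeasurable hmean
  have hpayment : IntegrableOn (fun v => (v * (qv v + qc v) - C * qc v) * f v) (Ici 0) :=
    ((integrable_mul_mul_of_memLp_top hmean (hqvb.add hqcb)).sub
      (integrable_mul_mul_of_memLp_top (hf.const_mul C) hqcb)).congr
      (.of_forall fun _ => (sub_mul _ _ _).symm)
  calc (∫ v in Ici 0, (v * (qv v + qc v) - C * qc v) * f v)
      ≤ ∫ v in Ici 0, (riskNeutralPayment (fun x => qv x + qc x + extraAllocation C qc x) v * f v +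
          max (v - C) 0 * qc v * f v) :=
        setIntegral_mono_on hpayment (hneutral.add hexcess) measurableSet_Ici fun v hv => by
          rw [← add_mul]
          exact mul_le_mul_of_nonneg_right (hIC.payment_le_riskNeutralPayment hC hqv hqc hv
            (intervalIntegrable_of_memLp_top hqvb hv)) (hf₀ v hv)
    _ = _ := integral_add hneutral hexcess

lemma setIntegral_mul_add_le_setIntegral_posPart_mul {φ f q r k : ℝ → ℝ}
    (hf₀ : ∀ v, 0 ≤ v → 0 ≤ f v) (hφ : IntegrableOn (fun v => φ v * f v) (Ici 0))
    (hq : MemLp q ⊤ (volume.restrict (Ici 0))) (hr : MemLp r ⊤ (volume.restrict (Ici 0)))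
    (hk : MemLp k ⊤ (volume.restrict (Ici 0))) (hqk : ∀ v, 0 ≤ v → 0 ≤ q v + k v)
    (hkr : ∀ v, 0 ≤ v → k v ≤ r v) :
    ∫ v in Ici 0, φ v * (q v + k v) * f v ≤
      (∫ v in Ici 0, max (φ v) 0 * q v * f v) + ∫ v in Ici 0, max (φ v) 0 * r v * f v := by
  have hφ' := integrableOn_posPart_mul hf₀ hφ
  have hφq := integrable_mul_mul_of_memLp_top hφ' hq
  have hφr := integrable_mul_mul_of_memLp_top hφ' hr
  rw [← integral_add hφq hφr]
  refine setIntegral_mono_on (integrable_mul_mul_of_memLp_top hφ (hq.add hk)) (hφq.add hφr)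
    measurableSet_Ici fun v hv => ?_
  rw [← add_mul, ← mul_add]
  refine mul_le_mul_of_nonneg_right ?_ (hf₀ v hv)
  calc φ v * (q v + k v) ≤ max (φ v) 0 * (q v + k v) :=
        mul_le_mul_of_nonneg_right (le_max_left _ _) (hqk v hv)
    _ ≤ max (φ v) 0 * (q v + r v) :=
        mul_le_mul_of_nonneg_left (add_le_add_right (hkr v hv) _) (le_max_right _ _)

end ExpectedPayment

lemma one_sub_eq_setIntegral_Ioi {f F : ℝ → ℝ} (hprob : ∫ v in Ici 0, f v = 1)
    (hF : ∀ v, F v = ∫ t in (0 : ℝ)..v, f t) {v : ℝ} (hv : 0 ≤ v) :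
    1 - F v = ∫ t in Ioi v, f t := by
  have hf : IntegrableOn f (Ioi 0) :=
    (integrable_of_integral_eq_one hprob).mono_measure
      (Measure.restrict_mono_set _ Ioi_subset_Ici_self)
  rw [hF, ← hprob, integral_Ici_eq_integral_Ioi,
    ← intervalIntegral.integral_interval_add_Ioi hf (hf.mono_set (Ioi_subset_Ioi hv)),
    add_sub_cancel_left]

theorem two_priced_payment_upper_bound_general {C B : ℝ} (hC : 0 < C) {qv qc : ℝ → ℝ}
    (hmv : AEStronglyMeasurable qv (volume.restrict (Ici 0)))
    (hqv : ∀ v, 0 ≤ v → 0 ≤ qv v) (hqc : ∀ v, 0 ≤ v → qc v ∈ Icc 0 B)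
    (hIC : IsDownwardIC C qv qc) {f F : ℝ → ℝ} (hfpos : ∀ v, 0 ≤ v → 0 < f v)
    (hf : IntegrableOn f (Ici 0)) (hF : ∀ v, 0 ≤ v → 1 - F v = ∫ t in Ioi v, f t)
    (hmean : IntegrableOn (fun v => v * f v) (Ici 0)) :
    (∫ v in Ici 0, (v * (qv v + qc v) - C * qc v) * f v) ≤
      (∫ v in Ici 0, max (virtualValue f F v) 0 * (qv v + qc v) * f v) +
        (∫ v in Ici 0, max (virtualValue f F v) 0 * qc v * f v) +
          ∫ v in Ici 0, max (v - C) 0 * qc v * f v := by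
  have hf₀ := fun v hv => (hfpos v hv).le
  have hfne := fun v hv => (hfpos v hv).ne'
  have hqc₀ := fun v hv => (hqc v hv).1
  have hmono := hIC.monotoneOn_discounted hC hqv
  have hk₀ := fun v hv => extraAllocation_nonneg (v := v) hC.le hqc₀ hv
  have hkle := fun v hv => extraAllocation_le (v := v) hC.le hqc₀ hmono hv
  have hqvb := hIC.memLp_top_undiscounted hC hmv hqv hqc
  have hqcb := memLp_top_of_monotoneOn_Ici hmono hqc
  have hkb := memLp_top_of_monotoneOn_Ici (monotoneOn_extraAllocation hC.le hqc₀ hmono)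
    fun v hv => ⟨hk₀ v hv, (hkle v hv).trans (hqc v hv).2⟩
  have hpayment := hIC.setIntegral_payment_le_setIntegral_riskNeutralPayment hC hqv hqc₀
    hqvb hqcb hkb hf₀ hf hmean
  have hmyerson := setIntegral_riskNeutralPayment_eq_setIntegral_virtualValue
    ((hqvb.add hqcb).add hkb) hf.aestronglyMeasurable hfne hF hmean
  have hvirtual := integrableOn_virtualValue_mul_density hf.aestronglyMeasurable hfne hF hmean
  have hsurplus := setIntegral_mul_add_le_setIntegral_posPart_mul hf₀ hvirtual
    (hqvb.add hqcb) hqcb hkb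
    (fun v hv => add_nonneg (add_nonneg (hqv v hv) (hqc₀ v hv)) (hk₀ v hv)) hkle
  exact hpayment.trans (add_le_add_left (hmyerson.trans_le hsurplus) _)

/-- For a measurable BIC two-priced mechanism `(q_v, q_c)` with capacity
`C > 0` and a value distribution on `[0,∞)` with CDF `F`, density `f > 0`, and finite
mean, the expected payment is at most
`E[φ⁺(V)·q(V)] + E[φ⁺(V)·q_c(V)] + E[(V − C)⁺·q_c(V)]`,
where `q = q_v + q_c`, `p(v) = v·q(v) − C·q_c(v)`, and `φ(v) = v − (1 − F(v))/f(v)`. -/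
theorem two_priced_payment_upper_bound
    (C : ℝ) (hC : 0 < C)
    (qv qc : ℝ → ℝ) (hmv : Measurable qv) (hmc : Measurable qc)
    (hqv : ∀ v, 0 ≤ v → qv v ∈ Icc (0 : ℝ) 1)
    (hqc : ∀ v, 0 ≤ v → qc v ∈ Icc (0 : ℝ) 1)
    (hsum : ∀ v, 0 ≤ v → qv v + qc v ≤ 1)
    (hBIC : ∀ v, 0 ≤ v → ∀ v', 0 ≤ v' →
        qv v * min (v - v) C + qc v * min (v - v + C) C ≥
          qv v' * min (v - v') C + qc v' * min (v - v' + C) C)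
    (f F : ℝ → ℝ) (hfm : Measurable f)
    (hfpos : ∀ v, 0 ≤ v → 0 < f v)
    (hprob : ∫ v in Ici (0 : ℝ), f v = 1)
    (hF : ∀ v, F v = ∫ t in (0 : ℝ)..v, f t)
    (hmean : IntegrableOn (fun v => v * f v) (Ici 0)) :
    (∫ v in Ici (0 : ℝ), (v * (qv v + qc v) - C * qc v) * f v) ≤
      (∫ v in Ici (0 : ℝ), max (v - (1 - F v) / f v) 0 * (qv v + qc v) * f v) +
        (∫ v in Ici (0 : ℝ), max (v - (1 - F v) / f v) 0 * qc v * f v) +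
          (∫ v in Ici (0 : ℝ), max (v - C) 0 * qc v * f v) :=
  two_priced_payment_upper_bound_general hC hmv.aestronglyMeasurable (fun v hv => (hqv v hv).1) hqc
    (fun v v' hv' hle => hBIC v (hv'.trans hle) v' hv') hfpos (integrable_of_integral_eq_one hprob)
    (fun _ hv => one_sub_eq_setIntegral_Ioi hprob hF hv) hmean
end

section
/- Let C > 0 and let (q_v, q_c) be a measurable BIC two-priced mechanism with capacity C. Define r(v) = (1/C)·sup{ q_v(z) : 0 ≤ z ≤ v }, and q̄_c(v) = ∫_0^v r(y) dy for v ∈ [0, C] and q̄_c(v) = q_c(v) for v > C. Then for all 0 ≤ v < v': ∫_v^{v'} q_v(z) dz ≤ C·(q̄_c(v') − q̄_c(v)). -/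
/-!
Put `f = C · q_c`. Letting a value `x` misreport `z ∈ [x - C, x]` shows that the chord of `f` from
`z` to `x` has slope at least `q_v(z)`. Over a window `[a, b]` of length at most `C`, the increment
of `f` then dominates even the integral of the running supremum of `q_v` from `a`: from any
`x ∈ (a, b]` move left to a `z ∈ [a, x)` at which `q_v` nearly attains its supremum over `[a, x)`;
the chord from `z` to `x` is nearly as steep as the largest value of the running supremum on
`(z, x)`, and continuous induction carries the comparison down to `a`.

Beyond `C` the bound follows by chaining windows. On `[0, C]` it holds because a function lies below
its running supremum. At the junction, the window `[0, C]` gives `q̄_c(C) ≤ q_c(C)`.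
-/

open Set

open Filter MeasureTheory Topology

section ContinuousInduction

theorem le_of_forall_exists_mem_Ico_le {α β : Type*} [ConditionallyCompleteLinearOrder α]
    [TopologicalSpace α] [OrderTopology α] [Preorder β] [TopologicalSpace β] [ClosedIicTopology β]
    {φ : α → β} {a b : α} (hab : a ≤ b) (hφ : ContinuousOn φ (Icc a b))
    (h : ∀ x ∈ Ioc a b, ∃ z ∈ Ico a x, φ z ≤ φ x) : φ a ≤ φ b := by
  have hclosed : IsClosed ({x | φ x ≤ φ b} ∩ Icc a b) := by
    rw [inter_comm]
    exact hφ.preimage_isClosed_of_isClosed isClosed_Icc isClosed_Iic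
  refine hclosed.mem_of_ge_of_forall_exists_lt (le_refl (φ b)) hab fun x hx => ?_
  obtain ⟨z, hz, hzx⟩ := h x hx.2
  exact ⟨z, hzx.trans hx.1, hz⟩

theorem integral_le_sub_of_forall_exists_mem_Ico {f H : ℝ → ℝ} {a b : ℝ} (hab : a ≤ b)
    (hf : ContinuousOn f (Icc a b)) (hH : IntervalIntegrable H volume a b)
    (h : ∀ ε > 0, ∀ x ∈ Ioc a b, ∃ z ∈ Ico a x, ∫ y in z..x, H y ≤ f x - f z + ε * (x - z)) :
    ∫ y in a..b, H y ≤ f b - f a := by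
  have hcont : ContinuousOn (fun x => ∫ y in a..x, H y) (Icc a b) := by
    simpa only [uIcc_of_le hab] using
      intervalIntegral.continuousOn_primitive_interval' hH left_mem_uIcc
  have hε : ∀ ε > 0, ∫ y in a..b, H y ≤ f b - f a + ε * (b - a) := by
    intro ε hε
    have hφ : f a - (∫ y in a..a, H y) + ε * a ≤ f b - (∫ y in a..b, H y) + ε * b := by
      refine le_of_forall_exists_mem_Ico_le (φ := fun x => f x - (∫ y in a..x, H y) + ε * x) hab
        ((hf.sub hcont).add (by fun_prop)) fun x hx => ?_
      obtain ⟨z, hz, hzx⟩ := h ε hε x hx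
      have hzb : z ≤ b := hz.2.le.trans hx.2
      have hsplit : (∫ y in a..z, H y) + ∫ y in z..x, H y = ∫ y in a..x, H y :=
        intervalIntegral.integral_add_adjacent_intervals
          (hH.mono_set (uIcc_subset_uIcc_left (by simp [uIcc_of_le hab, hz.1, hzb])))
          (hH.mono_set (uIcc_subset_uIcc (by simp [uIcc_of_le hab, hz.1, hzb])
            (by simp [uIcc_of_le hab, hx.1.le, hx.2])))
      exact ⟨z, hz, by linarith⟩
    rw [intervalIntegral.integral_same] at hφ
    linarith
  have hlim : Tendsto (fun ε => f b - f a + ε * (b - a)) (𝓝[>] 0) (𝓝 (f b - f a)) :=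
    tendsto_nhdsWithin_of_tendsto_nhds (Continuous.tendsto' (by fun_prop) _ _ (by simp))
  exact ge_of_tendsto hlim (eventually_of_mem self_mem_nhdsWithin hε)

end ContinuousInduction

section RunningSup

/-- The running supremum `y ↦ sup {g z | a ≤ z ≤ y}` of `g` from `a`. -/
def runningSup {α β : Type*} [Preorder α] [SupSet β] (g : α → β) (a y : α) : β :=
  sSup (g '' Icc a y)

theorem monotoneOn_runningSup {α β : Type*} [Preorder α] [ConditionallyCompleteLattice β]
    {g : α → β} {a b : α} (hg : BddAbove (g '' Icc a b)) :
    MonotoneOn (runningSup g a) (Icc a b) := fun _ hx _ hy hxy =>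
  csSup_le_csSup (hg.mono (image_mono (Icc_subset_Icc_right hy.2)))
    ((nonempty_Icc.2 hx.1).image g) (image_mono (Icc_subset_Icc_right hxy))

theorem le_runningSup {α β : Type*} [Preorder α] [ConditionallyCompleteLattice β]
    {g : α → β} {a y : α} (hg : BddAbove (g '' Icc a y)) (hay : a ≤ y) :
    g y ≤ runningSup g a y :=
  le_csSup hg (mem_image_of_mem g (right_mem_Icc.2 hay))

variable {f g : ℝ → ℝ} {a b v w C : ℝ}

theorem mul_integral_eq_integral_runningSup {r : ℝ → ℝ} (hC : C ≠ 0) (hab : a ≤ b)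
    (hr : ∀ y ∈ Icc a b, r y = (1 / C) * sSup (g '' Icc a y)) :
    C * ∫ y in a..b, r y = ∫ y in a..b, runningSup g a y := by
  rw [← intervalIntegral.integral_const_mul]
  refine intervalIntegral.integral_congr fun y hy => ?_
  rw [uIcc_of_le hab] at hy
  simp only [hr y hy, runningSup, ← mul_assoc, mul_one_div_cancel hC, one_mul]

theorem intervalIntegrable_runningSup (hav : a ≤ v) (hvw : v ≤ w)
    (hg : BddAbove (g '' Icc a w)) : IntervalIntegrable (runningSup g a) volume v w := by
  apply MonotoneOn.intervalIntegrable
  rw [uIcc_of_le hvw]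
  exact (monotoneOn_runningSup hg).mono (Icc_subset_Icc_left hav)

theorem integral_le_integral_runningSup (hav : a ≤ v) (hvw : v ≤ w)
    (hg : BddAbove (g '' Icc a w)) (hint : IntervalIntegrable g volume v w) :
    ∫ y in v..w, g y ≤ ∫ y in v..w, runningSup g a y :=
  intervalIntegral.integral_mono_on hvw hint (intervalIntegrable_runningSup hav hvw hg)
    fun _ hy => le_runningSup (hg.mono (image_mono (Icc_subset_Icc_right hy.2))) (hav.trans hy.1)

theorem integral_le_integral_runningSup_sub (hav : a ≤ v) (hvw : v ≤ w)
    (hg : BddAbove (g '' Icc a w)) (hint : IntervalIntegrable g volume v w) :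
    ∫ y in v..w, g y ≤ (∫ y in a..w, runningSup g a y) - ∫ y in a..v, runningSup g a y := by
  rw [intervalIntegral.integral_interval_sub_left
    (intervalIntegrable_runningSup le_rfl (hav.trans hvw) hg)
    (intervalIntegrable_runningSup le_rfl hav (hg.mono (image_mono (Icc_subset_Icc_right hvw))))]
  exact integral_le_integral_runningSup hav hvw hg hint

theorem exists_integral_runningSup_le (hab : a < b) (hg : BddAbove (g '' Icc a b)) {ε : ℝ}
    (hε : 0 < ε) :
    ∃ z ∈ Ico a b, ∫ y in z..b, runningSup g a y ≤ (g z + ε) * (b - z) := by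
  have hbdd : BddAbove (g '' Ico a b) := hg.mono (image_mono Ico_subset_Icc_self)
  obtain ⟨_, ⟨z, hz, rfl⟩, hlt⟩ := exists_lt_of_lt_csSup ((nonempty_Ico.2 hab).image g)
    (sub_lt_self (sSup (g '' Ico a b)) hε)
  have hle : ∀ y ∈ Ioo z b, runningSup g a y ≤ g z + ε := fun y hy => by
    have : runningSup g a y ≤ sSup (g '' Ico a b) :=
      csSup_le_csSup hbdd ((nonempty_Icc.2 (hz.1.trans hy.1.le)).image g)
        (image_mono (Icc_subset_Ico_right hy.2))
    linarith
  refine ⟨z, hz, ?_⟩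
  calc ∫ y in z..b, runningSup g a y
      ≤ ∫ _ in z..b, (g z + ε) :=
        intervalIntegral.integral_mono_on_of_le_Ioo hz.2.le
          (intervalIntegrable_runningSup hz.1 hz.2.le hg) intervalIntegrable_const hle
    _ = (g z + ε) * (b - z) := by rw [intervalIntegral.integral_const, smul_eq_mul, mul_comm]

theorem integral_runningSup_le_sub (hab : a ≤ b) (hf : ContinuousOn f (Icc a b))
    (hg : BddAbove (g '' Icc a b))
    (hfg : ∀ z x, a ≤ z → z ≤ x → x ≤ b → g z * (x - z) ≤ f x - f z) :
    ∫ y in a..b, runningSup g a y ≤ f b - f a := by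
  refine integral_le_sub_of_forall_exists_mem_Ico hab hf
    (intervalIntegrable_runningSup le_rfl hab hg) fun ε hε x hx => ?_
  obtain ⟨z, hz, hzx⟩ := exists_integral_runningSup_le hx.1
    (hg.mono (image_mono (Icc_subset_Icc_right hx.2))) hε
  exact ⟨z, hz, by linarith [hfg z x hz.1 hz.2.le hx.2]⟩

theorem integral_le_sub_of_local_slope_le (hC : 0 < C) (hab : a ≤ b)
    (hf : ContinuousOn f (Icc a b)) (hg : BddAbove (g '' Icc a b))
    (hint : IntervalIntegrable g volume a b)
    (hfg : ∀ z x, a ≤ z → z ≤ x → x ≤ b → x ≤ z + C → g z * (x - z) ≤ f x - f z) :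
    ∫ y in a..b, g y ≤ f b - f a := by
  refine integral_le_sub_of_forall_exists_mem_Ico hab hf hint fun ε hε x hx => ?_
  obtain ⟨z, hz, hxz⟩ : ∃ z ∈ Ico a x, x ≤ z + C :=
    ⟨max a (x - C), ⟨le_max_left _ _, max_lt hx.1 (by linarith)⟩,
      by linarith [le_max_right a (x - C)]⟩
  have hsub : Icc z x ⊆ Icc a b := Icc_subset_Icc hz.1 hx.2
  have hbdd : BddAbove (g '' Icc z x) := hg.mono (image_mono hsub)
  refine ⟨z, hz, ?_⟩
  calc ∫ y in z..x, g y
      ≤ ∫ y in z..x, runningSup g z y :=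
        integral_le_integral_runningSup le_rfl hz.2.le hbdd
          (hint.mono_set (by rwa [uIcc_of_le hz.2.le, uIcc_of_le hab]))
    _ ≤ f x - f z :=
        integral_runningSup_le_sub hz.2.le (hf.mono hsub) hbdd fun y t hy hyt ht =>
          hfg y t (hz.1.trans hy) hyt (ht.trans hx.2) (by linarith)
    _ ≤ f x - f z + ε * (x - z) :=
        le_add_of_nonneg_right (mul_nonneg hε.le (sub_nonneg.2 hz.2.le))

end RunningSup

section Mechanism

/-- The utility `U(v, v')` of an agent with value `v` and capacity `C` reporting `v'` to the
two-priced mechanism `(qv, qc)`: the surplus at either price, `v'` or `v' - C`, is capped at `C`. -/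
def interimUtility (C : ℝ) (qv qc : ℝ → ℝ) (v v' : ℝ) : ℝ :=
  qv v' * min (v - v') C + qc v' * min (v - v' + C) C

/-- Bayesian incentive compatibility of the two-priced mechanism `(qv, qc)` with capacity `C`: only
the incentive constraints between nonnegative values, without the feasibility `qv + qc ≤ 1`. -/
def IsBIC (C : ℝ) (qv qc : ℝ → ℝ) : Prop :=
  ∀ v, 0 ≤ v → ∀ v', 0 ≤ v' → interimUtility C qv qc v v' ≤ interimUtility C qv qc v v

namespace IsBIC

variable {C : ℝ} {qv qc : ℝ → ℝ} {a b z x : ℝ}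

theorem qv_mul_min_le (h : IsBIC C qv qc) (hC : 0 ≤ C) (hz : 0 ≤ z) (hzx : z ≤ x) :
    qv z * min (x - z) C ≤ C * (qc x - qc z) := by
  have hx := h x (hz.trans hzx) z hz
  simp only [interimUtility, sub_self, zero_add, min_self, min_eq_left hC, mul_zero,
    min_eq_right (show C ≤ x - z + C by linarith)] at hx
  linarith

theorem mul_qc_sub_le (h : IsBIC C qv qc) (hC : 0 ≤ C) (hz : 0 ≤ z) (hzx : z ≤ x) :
    C * (qc x - qc z) ≤ (qv x + qc x) * (x - z) := by
  have hz' := h z hz x (hz.trans hzx)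
  simp only [interimUtility, sub_self, zero_add, min_self, min_eq_left hC, mul_zero,
    min_eq_left (show z - x ≤ C by linarith), min_eq_left (show z - x + C ≤ C by linarith)] at hz'
  linarith

theorem monotoneOn_qc (h : IsBIC C qv qc) (hC : 0 < C) (hqv : ∀ v, 0 ≤ v → 0 ≤ qv v) :
    MonotoneOn qc (Ici 0) := by
  intro z hz x _ hzx
  have hnonneg : 0 ≤ C * (qc x - qc z) :=
    (mul_nonneg (hqv z hz) (le_min (sub_nonneg.2 hzx) hC.le)).trans (h.qv_mul_min_le hC.le hz hzx)
  exact sub_nonneg.1 (nonneg_of_mul_nonneg_right hnonneg hC)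

theorem qv_le_qc_sub (h : IsBIC C qv qc) (hC : 0 < C) (hz : 0 ≤ z) : qv z ≤ qc (z + C) - qc z := by
  have hslope := h.qv_mul_min_le hC.le hz (le_add_of_nonneg_right hC.le)
  rw [add_sub_cancel_left, min_self, mul_comm] at hslope
  exact le_of_mul_le_mul_left hslope hC

theorem bddAbove_image_qv (h : IsBIC C qv qc) (hC : 0 < C) (hqv : ∀ v, 0 ≤ v → 0 ≤ qv v)
    (ha : 0 ≤ a) : BddAbove (qv '' Icc a b) := by
  refine ⟨qc (b + C) - qc a, ?_⟩
  rintro _ ⟨z, hz, rfl⟩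
  have hz₀ : 0 ≤ z := ha.trans hz.1
  have hmono := h.monotoneOn_qc hC hqv
  have hleft : qc a ≤ qc z := hmono ha hz₀ hz.1
  have hright : qc (z + C) ≤ qc (b + C) :=
    hmono (by rw [mem_Ici]; linarith) (by rw [mem_Ici]; linarith [hz.2]) (by linarith [hz.2])
  linarith [h.qv_le_qc_sub hC hz₀]

theorem continuousOn_qc (h : IsBIC C qv qc) (hC : 0 < C) (hqv : ∀ v, 0 ≤ v → 0 ≤ qv v)
    (ha : 0 ≤ a) : ContinuousOn qc (Icc a b) := by
  obtain ⟨M, hM⟩ := h.bddAbove_image_qv hC hqv ha (b := b)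
  have hmono := h.monotoneOn_qc hC hqv
  let K : NNReal := ((M + qc b) / C).toNNReal
  refine (LipschitzOnWith.of_le_add_mul K fun x hx z hz => ?_).continuousOn
  have hx₀ : 0 ≤ x := ha.trans hx.1
  have hz₀ : 0 ≤ z := ha.trans hz.1
  rcases le_total x z with hxz | hzx
  · exact (hmono hx₀ hz₀ hxz).trans (le_add_of_nonneg_right (by positivity))
  have hsum : qv x + qc x ≤ M + qc b :=
    add_le_add (hM (mem_image_of_mem qv hx)) (hmono hx₀ (hx₀.trans hx.2) hx.2)
  have hsub : qc x - qc z ≤ K * (x - z) :=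
    calc qc x - qc z
        ≤ (qv x + qc x) * (x - z) / C := by
          rw [le_div_iff₀' hC]
          exact h.mul_qc_sub_le hC.le hz₀ hzx
      _ ≤ (M + qc b) * (x - z) / C := by gcongr
      _ = (M + qc b) / C * (x - z) := by ring
      _ ≤ K * (x - z) := by gcongr; exact Real.le_coe_toNNReal _
  rw [Real.dist_eq, abs_of_nonneg (sub_nonneg.2 hzx)]
  linarith

theorem intervalIntegrable_qv (h : IsBIC C qv qc) (hC : 0 < C) (hqv : ∀ v, 0 ≤ v → 0 ≤ qv v)
    (hm : AEStronglyMeasurable qv (volume.restrict (Ici 0))) (ha : 0 ≤ a) (hab : a ≤ b) :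
    IntervalIntegrable qv volume a b := by
  obtain ⟨M, hM⟩ := h.bddAbove_image_qv hC hqv ha (b := b)
  have hsub : Icc a b ⊆ Ici 0 := fun z hz => ha.trans hz.1
  rw [intervalIntegrable_iff_integrableOn_Icc_of_le hab]
  refine IntegrableOn.of_bound measure_Icc_lt_top (hm.mono_set hsub) M ?_
  filter_upwards [ae_restrict_mem measurableSet_Icc] with z hz
  rw [Real.norm_of_nonneg (hqv z (hsub hz))]
  exact hM (mem_image_of_mem qv hz)

theorem integral_qv_le (h : IsBIC C qv qc) (hC : 0 < C) (hqv : ∀ v, 0 ≤ v → 0 ≤ qv v)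
    (hm : AEStronglyMeasurable qv (volume.restrict (Ici 0))) (ha : 0 ≤ a) (hab : a ≤ b) :
    ∫ y in a..b, qv y ≤ C * (qc b - qc a) := by
  rw [mul_sub]
  refine integral_le_sub_of_local_slope_le (f := fun x => C * qc x) hC hab
    ((h.continuousOn_qc hC hqv ha).const_mul C) (h.bddAbove_image_qv hC hqv ha)
    (h.intervalIntegrable_qv hC hqv hm ha hab) fun z x hz hzx _ hxz => ?_
  have hslope := h.qv_mul_min_le hC.le (ha.trans hz) hzx
  rwa [min_eq_left (by linarith), mul_sub C] at hslope

theorem integral_runningSup_qv_le (h : IsBIC C qv qc) (hC : 0 < C) (hqv : ∀ v, 0 ≤ v → 0 ≤ qv v)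
    (ha : 0 ≤ a) (hab : a ≤ b) (hb : b ≤ a + C) :
    ∫ y in a..b, runningSup qv a y ≤ C * (qc b - qc a) := by
  rw [mul_sub]
  refine integral_runningSup_le_sub (f := fun x => C * qc x) hab
    ((h.continuousOn_qc hC hqv ha).const_mul C) (h.bddAbove_image_qv hC hqv ha)
    fun z x hz hzx hx => ?_
  have hslope := h.qv_mul_min_le hC.le (ha.trans hz) hzx
  rwa [min_eq_left (by linarith), mul_sub C] at hslope

end IsBIC

end Mechanism

theorem qcbar_integral_lower_IC_general {C : ℝ} (hC : 0 < C) {qv qc : ℝ → ℝ}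
    (hm : AEStronglyMeasurable qv (volume.restrict (Ici 0)))
    (hqv : ∀ v, 0 ≤ v → 0 ≤ qv v) (hqc : 0 ≤ qc 0) (hBIC : IsBIC C qv qc)
    {r : ℝ → ℝ} (hr : ∀ v, 0 ≤ v → r v = (1 / C) * sSup (qv '' Icc 0 v))
    {qcbar : ℝ → ℝ} (hlow : ∀ v ∈ Icc (0 : ℝ) C, qcbar v = ∫ y in (0 : ℝ)..v, r y)
    (hhigh : ∀ v, C < v → qcbar v = qc v) {v v' : ℝ} (hv : 0 ≤ v) (hvv' : v ≤ v') :
    ∫ z in v..v', qv z ≤ C * (qcbar v' - qcbar v) := by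
  have hint {a b : ℝ} : 0 ≤ a → a ≤ b → IntervalIntegrable qv volume a b :=
    hBIC.intervalIntegrable_qv hC hqv hm
  have hbar : ∀ w ∈ Icc 0 C, C * qcbar w = ∫ y in (0 : ℝ)..w, runningSup qv 0 y := fun w hw => by
    rw [hlow w hw, mul_integral_eq_integral_runningSup hC.ne' hw.1 fun y hy => hr y hy.1]
  have hbelow : ∀ w ∈ Icc v C, ∫ z in v..w, qv z ≤ C * (qcbar w - qcbar v) := fun w hw => by
    rw [mul_sub, hbar w ⟨hv.trans hw.1, hw.2⟩, hbar v ⟨hv, hw.1.trans hw.2⟩]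
    exact integral_le_integral_runningSup_sub hv hw.1 (hBIC.bddAbove_image_qv hC hqv le_rfl)
      (hint hv hw.1)
  have hjunction : C * qcbar C ≤ C * (qc C - qc 0) := by
    rw [hbar C ⟨hC.le, le_rfl⟩]
    exact hBIC.integral_runningSup_qv_le hC hqv le_rfl hC.le (zero_add C).ge
  rcases le_or_gt v' C with hle | hlt
  · exact hbelow v' ⟨hvv', hle⟩
  rw [hhigh v' hlt]
  rcases lt_or_ge C v with hCv | hvC
  · rw [hhigh v hCv]
    exact hBIC.integral_qv_le hC hqv hm hv hvv'
  · rw [← intervalIntegral.integral_add_adjacent_intervals (hint hv hvC) (hint hC.le hlt.le)]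
    linarith [hbelow C ⟨hvC, le_rfl⟩, hBIC.integral_qv_le hC hqv hm hC.le hlt.le,
      mul_nonneg hC.le hqc]

/-- For a measurable BIC two-priced mechanism `(q_v, q_c)` with capacity
`C > 0`, the convexified rule `q̄_c` satisfies the lower incentive bound in integral
form: for all `0 ≤ v < v'`, `∫_v^{v'} q_v(z) dz ≤ C·(q̄_c(v') − q̄_c(v))`. -/
theorem qcbar_integral_lower_IC
    (C : ℝ) (hC : 0 < C)
    (qv qc : ℝ → ℝ) (hmv : Measurable qv) (hmc : Measurable qc)
    (hqv : ∀ v, 0 ≤ v → qv v ∈ Icc (0 : ℝ) 1)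
    (hqc : ∀ v, 0 ≤ v → qc v ∈ Icc (0 : ℝ) 1)
    (hsum : ∀ v, 0 ≤ v → qv v + qc v ≤ 1)
    (hBIC : ∀ v, 0 ≤ v → ∀ v', 0 ≤ v' →
        qv v * min (v - v) C + qc v * min (v - v + C) C ≥
          qv v' * min (v - v') C + qc v' * min (v - v' + C) C)
    (r : ℝ → ℝ) (hr : ∀ v, 0 ≤ v → r v = (1 / C) * sSup (qv '' Icc 0 v))
    (qcbar : ℝ → ℝ)
    (hqcbar1 : ∀ v ∈ Icc (0 : ℝ) C, qcbar v = ∫ y in (0 : ℝ)..v, r y)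
    (hqcbar2 : ∀ v, C < v → qcbar v = qc v) :
    ∀ v v' : ℝ, 0 ≤ v → v < v' →
      (∫ z in v..v', qv z) ≤ C * (qcbar v' - qcbar v) := fun _ _ hv hvv' =>
  qcbar_integral_lower_IC_general hC hmv.aestronglyMeasurable (fun z hz => (hqv z hz).1)
    (hqc 0 le_rfl).1 hBIC hr hqcbar1 hqcbar2 hv hvv'.le
end
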